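/- Let (R,m) be a d-dimensional Noetherian complete local domain of prime characteristic p > 0, let I = (g_1,…,g_n) be an ideal of R, let u ∈ R, and let S = R[Z_1,…,Z_n]/(u − Σ_{l=1}^n Z_l g_l) be the generic forcing algebra. Then H^d_m(S) ≠ 0 (where S is regarded as an R-module) if and only if the image in S of every system of parameters of R forms a Q-sequence in S. -/

import Mathlib

set_option synthInstance.maxHeartbeats 1000000
set_option maxHeartbeats 1000000
open scoped BigOperators ENNReal TensorProduct

universe u

/-- A filtration of `M` of length `h` whose factors are cyclic modules killed by `J`. -/
def HasQLFiltration (S : Type u) [CommRing S] (J : Ideal S)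
    (M : Type u) [AddCommGroup M] [Module S M] (h : ℕ) : Prop :=
  ∃ c : Fin (h + 1) → Submodule S M,
    Monotone c ∧ c 0 = ⊥ ∧ c (Fin.last h) = ⊤ ∧
    ∀ i : Fin h,
      (∃ m : M, c i.succ = c i.castSucc ⊔ Submodule.span S {m}) ∧
      ∀ a ∈ J, ∀ x ∈ c i.succ, a • x ∈ c i.castSucc

/-- The `J`-quasilength of `M`. -/
noncomputable def quasilength (S : Type u) [CommRing S] (J : Ideal S)
    (M : Type u) [AddCommGroup M] [Module S M] : ℕ∞ :=
  sInf {n : ℕ∞ | ∃ h : ℕ, n = (h : ℕ∞) ∧ HasQLFiltration S J M h}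

/-- `x₁, …, x_d` is a Q-sequence in `S`. -/
def IsQSequence {d : ℕ} {S : Type u} [CommRing S] (x : Fin d → S) : Prop :=
  Ideal.span (Set.range x) ≠ ⊤ ∧
  ∀ t : ℕ, 0 < t →
    ((t : ℕ∞) ^ d) ≤ quasilength S (Ideal.span (Set.range x))
      (S ⧸ Ideal.span (Set.range fun i => x i ^ t))



/-! ### Part A: from Mathlib's local cohomology to injective resolutions -/

namespace FA

section ExtBridge
open CategoryTheory CategoryTheory.Limits Opposite localCohomology

variable {R : Type u} [CommRing R] (J : Ideal R) (n : ℕ) (M : ModuleCat.{u} R)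

/-- the projection between the quotients by powers -/
noncomputable def qmap {k k' : ℕ} (h : k ≤ k') :
    ModuleCat.of R (R ⧸ J ^ k') ⟶ ModuleCat.of R (R ⧸ J ^ k) :=
  ModuleCat.ofHom (Submodule.mapQ _ _ LinearMap.id (Ideal.pow_le_pow_right h))

lemma lc_subsingleton_iff_ext :
    Subsingleton ((localCohomology J n).obj M) ↔
    ∀ (k : ℕ) (ξ : ((Ext R (ModuleCat.{u} R) n).obj (op (ModuleCat.of R (R ⧸ J ^ k)))).obj M),
      ∃ (k' : ℕ) (h : k ≤ k'),
        (((Ext R (ModuleCat.{u} R) n).map (qmap J h).op).app M).hom ξ = 0 := by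
  have hc := hasColimitDiagram.{u, 0} (idealPowersDiagram J) n
  let F : (ℕᵒᵖ)ᵒᵖ ⥤ ModuleCat.{u} R :=
    diagram (idealPowersDiagram J) n ⋙ (evaluation _ _).obj M
  let D : Cocone F := ((evaluation _ _).obj M).mapCocone
    (colimit.cocone (diagram (idealPowersDiagram J) n))
  have : PreservesFilteredColimitsOfSize.{0, 0} (forget (ModuleCat.{u} R)) :=
    preservesFilteredColimitsOfSize_shrink.{0, u, 0, u} _
  have : PreservesColimitsOfShape (ℕᵒᵖ)ᵒᵖ (forget (ModuleCat.{u} R)) :=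
    PreservesFilteredColimitsOfSize.preserves_filtered_colimits _
  have hD : IsColimit D := isColimitOfPreserves _ (colimit.isColimit _)
  change Subsingleton D.pt ↔ _
  constructor
  · intro hs k ξ
    obtain ⟨j, f, g, h⟩ := Concrete.isColimit_exists_of_rep_eq F (i := op (op k)) (j := op (op k)) hD
      (ξ : F.obj (op (op k))) (0 : F.obj (op (op k))) (@Subsingleton.elim D.pt hs _ _)
    have hk : k ≤ j.unop.unop := f.unop.unop.le
    refine ⟨j.unop.unop, hk, ?_⟩
    have h2 : (F.map f).hom ξ = 0 := by
      refine h.trans ?_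
      exact map_zero (F.map g).hom
    exact h2
  · intro H
    refine ⟨fun a b => ?_⟩
    have h0 : ∀ a : D.pt, a = 0 := by
      intro a
      obtain ⟨j, y, rfl⟩ := Concrete.isColimit_exists_rep F hD a
      obtain ⟨k', hk, h⟩ := H j.unop.unop y
      have h' : (F.map (homOfLE hk).op.op).hom y = 0 := h
      have := D.w (homOfLE hk).op.op
      rw [← this]
      change (D.ι.app _).hom ((F.map (homOfLE hk).op.op).hom y) = 0
      rw [h', map_zero]
    rw [h0 a, h0 b]

end ExtBridge
end FA
namespace FA
section ExtBridge2
open CategoryTheory CategoryTheory.Limits Opposite HomologicalComplex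

variable {R : Type u} [CommRing R] (n : ℕ) (M : ModuleCat.{u} R) {X X' : ModuleCat.{u} R}

lemma iso_swap {C : Type*} [Category C] {A B A' B' : C} (e : A ≅ B) (e' : A' ≅ B') (a : A ⟶ A')
    (b : B ⟶ B') (h : a ≫ e'.hom = e.hom ≫ b) : e.inv ≫ a = b ≫ e'.inv := by
  rw [Iso.inv_comp_eq, ← Category.assoc, Iso.eq_comp_inv]; exact h

lemma paste_sq {C : Type*} [Category C] {A₁ A₂ A₃ B₁ B₂ B₃ : C} (a : A₁ ⟶ B₁) (b' : B₁ ⟶ B₂)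
    (b : A₁ ⟶ A₂) (h : A₂ ⟶ B₂) (c' : B₂ ⟶ B₃) (c : A₂ ⟶ A₃) (m : A₃ ⟶ B₃)
    (h₁ : a ≫ b' = b ≫ h) (h₂ : h ≫ c' = c ≫ m) : a ≫ b' ≫ c' = (b ≫ c) ≫ m := by
  rw [← Category.assoc, h₁, Category.assoc, h₂, Category.assoc]

/-- the contravariant functoriality of `linearYonedaObj` -/
noncomputable def lyMap {P P' : ChainComplex (ModuleCat.{u} R) ℕ} (φ : P' ⟶ P) :
    P.linearYonedaObj R M ⟶ P'.linearYonedaObj R M :=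
  (HomologicalComplex.unopFunctor _ _).map
    ((((linearYoneda R (ModuleCat.{u} R)).obj M).rightOp.mapHomologicalComplex _).map φ).op

lemma lyMap_f {P P' : ChainComplex (ModuleCat.{u} R) ℕ} (φ : P' ⟶ P) (i : ℕ) (c : P.X i ⟶ M) :
    ((lyMap M φ).f i).hom c = φ.f i ≫ c := rfl

lemma isoExt_nat (P : ProjectiveResolution X) (P' : ProjectiveResolution X') (f : X' ⟶ X)
    (φ : P'.complex ⟶ P.complex) (hφ : φ.f 0 ≫ P.π.f 0 = P'.π.f 0 ≫ f) :
    ((Ext R (ModuleCat.{u} R) n).map f.op).app M ≫ (P'.isoExt n M).hom =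
      (P.isoExt (R := R) n M).hom ≫ homologyMap (lyMap M φ) n := by
  let F := ((linearYoneda R (ModuleCat.{u} R)).obj M).rightOp
  have h1 := ProjectiveResolution.isoLeftDerivedObj_hom_naturality f P' P φ hφ F n
  have h1' : (P'.isoLeftDerivedObj F n).inv ≫ (F.leftDerived n).map f =
      (F.mapHomologicalComplex _ ⋙ HomologicalComplex.homologyFunctor _ _ n).map φ ≫
        (P.isoLeftDerivedObj F n).inv := by
    rw [Iso.inv_comp_eq, ← Category.assoc, Iso.eq_comp_inv]; exact h1
  have h2 := congrArg Quiver.Hom.unop h1'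
  have h3 := homologyOp_hom_naturality (lyMap M φ) n
  have h3' : ((P'.complex.linearYonedaObj R M).homologyOp n).inv ≫
      homologyMap ((opFunctor _ _).map (lyMap M φ).op) n =
      (homologyMap (lyMap M φ) n).op ≫ ((P.complex.linearYonedaObj R M).homologyOp n).inv := by
    exact iso_swap _ _ _ _ h3
  have h4 := congrArg Quiver.Hom.unop h3'
  change ((F.leftDerived n).map f).unop ≫ (P'.isoLeftDerivedObj F n).inv.unop ≫
    ((P'.complex.linearYonedaObj R M).homologyOp n).inv.unop =
    ((P.isoLeftDerivedObj F n).inv.unop ≫ ((P.complex.linearYonedaObj R M).homologyOp n).inv.unop) ≫ 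
      homologyMap (lyMap M φ) n
  exact paste_sq _ _ _ _ _ _ _ h2 h4

/-- `c` is a cocycle representing `ξ`. -/
def OldRep (P : ProjectiveResolution X) (c : P.complex.X n ⟶ M)
    (ξ : ((Ext R (ModuleCat.{u} R) n).obj (op X)).obj M) : Prop :=
  ∃ z : (P.complex.linearYonedaObj R M).cycles n,
    ((P.complex.linearYonedaObj R M).iCycles n).hom z = c ∧
    ((P.complex.linearYonedaObj R M).homologyπ n).hom z = (P.isoExt (R := R) n M).hom.hom ξ

variable {n M}

lemma OldRep.map {P : ProjectiveResolution X} {P' : ProjectiveResolution X'} (f : X' ⟶ X)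
    (φ : P'.complex ⟶ P.complex) (hφ : φ.f 0 ≫ P.π.f 0 = P'.π.f 0 ≫ f)
    {c : P.complex.X n ⟶ M} {ξ : ((Ext R (ModuleCat.{u} R) n).obj (op X)).obj M}
    (h : OldRep n M P c ξ) :
    OldRep n M P' (φ.f n ≫ c) ((((Ext R (ModuleCat.{u} R) n).map f.op).app M).hom ξ) := by
  obtain ⟨z, rfl, hz⟩ := h
  refine ⟨(cyclesMap (lyMap M φ) n).hom z, ?_, ?_⟩
  · have := congrArg (fun k => k.hom z) (cyclesMap_i (lyMap M φ) n)
    exact this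
  · have h1 := congrArg (fun k => k.hom z) (homologyπ_naturality (lyMap M φ) n)
    have h2 := congrArg (fun k => k.hom ξ) (isoExt_nat n M P P' f φ hφ)
    refine Eq.trans h1.symm (Eq.trans ?_ h2.symm)
    exact congrArg (homologyMap (lyMap M φ) n).hom hz

lemma OldRep.exists (P : ProjectiveResolution X)
    (ξ : ((Ext R (ModuleCat.{u} R) n).obj (op X)).obj M) :
    ∃ c : P.complex.X n ⟶ M, OldRep n M P c ξ := by
  obtain ⟨z, hz⟩ := (ModuleCat.epi_iff_surjective _).mp
    (inferInstance : Epi ((P.complex.linearYonedaObj R M).homologyπ n))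
      ((P.isoExt (R := R) n M).hom.hom ξ)
  exact ⟨_, z, rfl, hz⟩

lemma OldRep.closed {P : ProjectiveResolution X} {c : P.complex.X n ⟶ M}
    {ξ : ((Ext R (ModuleCat.{u} R) n).obj (op X)).obj M} (h : OldRep n M P c ξ) :
    P.complex.d (n + 1) n ≫ c = 0 := by
  obtain ⟨z, rfl, hz⟩ := h
  have := congrArg (fun k => k.hom z) ((P.complex.linearYonedaObj R M).iCycles_d n (n + 1))
  exact this

lemma OldRep.of_closed (P : ProjectiveResolution X) (c : P.complex.X n ⟶ M)
    (hc : P.complex.d (n + 1) n ≫ c = 0) :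
    ∃ ξ : ((Ext R (ModuleCat.{u} R) n).obj (op X)).obj M, OldRep n M P c ξ := by
  let K := P.complex.linearYonedaObj R M
  have hex := (ShortComplex.moduleCat_exact_iff _).mp
    (ShortComplex.exact_of_f_is_kernel (ShortComplex.mk (K.iCycles n) (K.d n (n + 1)) (by simp))
      (K.cyclesIsKernel n (n + 1) (by simp)))
  obtain ⟨z, hz⟩ := hex c hc
  refine ⟨(P.isoExt (R := R) n M).inv.hom ((K.homologyπ n).hom z), z, hz, ?_⟩
  have := congrArg (fun k => k.hom ((K.homologyπ n).hom z)) (P.isoExt (R := R) n M).inv_hom_id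
  exact this.symm

lemma OldRep.zero_iff {P : ProjectiveResolution X} {c : P.complex.X n ⟶ M}
    {ξ : ((Ext R (ModuleCat.{u} R) n).obj (op X)).obj M} (h : OldRep n M P c ξ) :
    ξ = 0 ↔ ∃ g : P.complex.X (n - 1) ⟶ M, P.complex.d n (n - 1) ≫ g = c := by
  obtain ⟨z, rfl, hz⟩ := h
  let K := P.complex.linearYonedaObj R M
  have hprev : (ComplexShape.up ℕ).prev n = n - 1 := by
    cases n with
    | zero => simp
    | succ n => simp
  have hex := (ShortComplex.moduleCat_exact_iff _).mp
    (ShortComplex.exact_of_g_is_cokernel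
      (ShortComplex.mk (K.toCycles (n - 1) n) (K.homologyπ n) (by simp))
      (K.homologyIsCokernel (n - 1) n hprev))
  have h1 : ξ = 0 ↔ (K.homologyπ n).hom z = 0 := by
    constructor
    · rintro rfl; rw [hz, map_zero]
    · intro h
      rw [hz] at h
      have := congrArg (P.isoExt (R := R) n M).inv.hom h
      have h2 := congrArg (fun k => k.hom ξ) (P.isoExt (R := R) n M).hom_inv_id
      rw [map_zero] at this
      exact h2.symm.trans this
  rw [h1]
  constructor
  · intro h
    obtain ⟨g, hg⟩ := hex z h
    refine ⟨g, ?_⟩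
    have h2 := congrArg (fun k => k.hom g) (K.toCycles_i (n - 1) n)
    refine h2.symm.trans ?_
    exact congrArg (K.iCycles n).hom hg
  · rintro ⟨g, hg⟩
    have h2 := congrArg (fun k => k.hom g) (K.toCycles_i (n - 1) n)
    have h3 : (K.toCycles (n - 1) n).hom g = z := by
      apply (ModuleCat.mono_iff_injective (K.iCycles n)).mp inferInstance
      exact h2.trans hg
    rw [← h3]
    have := congrArg (fun k => k.hom g) (K.toCycles_comp_homologyπ (n - 1) n)
    exact this

end ExtBridge2
end FA
namespace FA
section ExtBridge3
open CategoryTheory CategoryTheory.Limits Opposite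

variable {R : Type u} [CommRing R] {n : ℕ} {M : ModuleCat.{u} R} {X X' : ModuleCat.{u} R}

open CochainComplex HomComplex in
lemma proj_extMk_zero (P : ProjectiveResolution X) (f : P.complex.X n ⟶ M)
    (hf : P.complex.d (n + 1) n ≫ f = 0) :
    P.extMk f (n + 1) rfl hf = 0 ↔
      ∃ g : P.complex.X (n - 1) ⟶ M, P.complex.d n (n - 1) ≫ g = f := by
  cases n with
  | succ n => exact P.extMk_eq_zero_iff f _ rfl hf n rfl
  | zero =>
    simp only [← P.extEquivCohomologyClass.apply_eq_iff_eq,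
      ProjectiveResolution.extEquivCohomologyClass_extMk,
      ProjectiveResolution.extEquivCohomologyClass_zero,
      CohomologyClass.mk_eq_zero_iff]
    rw [Cocycle.toSingleMk_mem_coboundaries_iff _ _ _ _ _ 1 (by simp)]
    have hz : IsZero (P.cochainComplex.X 1) := P.cochainComplex.isZero_of_isStrictlyLE 0 1 (by simp)
    constructor
    · rintro ⟨g, hg⟩
      refine ⟨0, ?_⟩
      rw [comp_zero]
      have h2 : (P.cochainComplexXIso (-(0:ℕ)) 0 rfl).hom ≫ f = 0 := by
        rw [← hg]
        have : g = 0 := hz.eq_of_src _ _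
        rw [this, comp_zero]
      rw [← cancel_epi (P.cochainComplexXIso (-(0:ℕ)) 0 rfl).hom, h2, comp_zero]
    · rintro ⟨g, hg⟩
      refine ⟨0, ?_⟩
      have : f = 0 := by rw [← hg, HomologicalComplex.shape _ _ _ (by simp), zero_comp]
      rw [this, comp_zero, comp_zero]

open CochainComplex HomComplex in
lemma inj_extMk_zero (I : InjectiveResolution M) (f : X ⟶ I.cocomplex.X n)
    (hf : f ≫ I.cocomplex.d n (n + 1) = 0) :
    I.extMk f (n + 1) rfl hf = 0 ↔
      ∃ g : X ⟶ I.cocomplex.X (n - 1), g ≫ I.cocomplex.d (n - 1) n = f := by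
  cases n with
  | succ n => exact I.extMk_eq_zero_iff f _ rfl hf n rfl
  | zero =>
    simp only [← I.extEquivCohomologyClass.apply_eq_iff_eq,
      InjectiveResolution.extEquivCohomologyClass_extMk,
      InjectiveResolution.extEquivCohomologyClass_zero,
      CohomologyClass.mk_eq_zero_iff]
    rw [Cocycle.fromSingleMk_mem_coboundaries_iff _ _ _ _ _ (-1) (by simp)]
    have hz : IsZero (I.cochainComplex.X (-1)) :=
      I.cochainComplex.isZero_of_isStrictlyGE 0 (-1) (by simp)
    constructor
    · rintro ⟨g, hg⟩
      refine ⟨0, ?_⟩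
      rw [zero_comp]
      have h2 : f ≫ (I.cochainComplexXIso (0:ℕ) 0 rfl).inv = 0 := by
        rw [← hg]
        have : g = 0 := hz.eq_of_tgt _ _
        rw [this, zero_comp]
      rw [← cancel_mono (I.cochainComplexXIso (0:ℕ) 0 rfl).inv, h2, zero_comp]
    · rintro ⟨g, hg⟩
      refine ⟨0, ?_⟩
      have : f = 0 := by rw [← hg, HomologicalComplex.shape _ _ _ (by simp), comp_zero]
      rw [this, zero_comp, zero_comp]

lemma ext_old_new (J : Ideal R) :
    (∀ (k : ℕ) (ξ : ((Ext R (ModuleCat.{u} R) n).obj (op (ModuleCat.of R (R ⧸ J ^ k)))).obj M),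
      ∃ (k' : ℕ) (h : k ≤ k'),
        (((Ext R (ModuleCat.{u} R) n).map (qmap J h).op).app M).hom ξ = 0) ↔
    ∀ (k : ℕ) (ξ : Abelian.Ext (ModuleCat.of R (R ⧸ J ^ k)) M n),
      ∃ (k' : ℕ) (h : k ≤ k'), (Abelian.Ext.mk₀ (qmap J h)).comp ξ (zero_add _) = 0 := by
  let P : ∀ k : ℕ, ProjectiveResolution (ModuleCat.of R (R ⧸ J ^ k)) :=
    fun k => ProjectiveResolution.of _
  have key : ∀ {k k' : ℕ} (h : k ≤ k') (c : (P k).complex.X n ⟶ M)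
    (hc : (P k).complex.d (n + 1) n ≫ c = 0)
    (ξ : ((Ext R (ModuleCat.{u} R) n).obj (op (ModuleCat.of R (R ⧸ J ^ k)))).obj M),
    OldRep n M (P k) c ξ →
      ((((Ext R (ModuleCat.{u} R) n).map (qmap J h).op).app M).hom ξ = 0 ↔
      (Abelian.Ext.mk₀ (qmap J h)).comp ((P k).extMk c (n + 1) rfl hc) (zero_add _) = 0) := by
    intro k k' h c hc ξ hr
    let φ := ProjectiveResolution.lift (qmap J h) (P k') (P k)
    have hφ := ProjectiveResolution.lift_commutes_zero (qmap J h) (P k') (P k)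
    let Φ : ProjectiveResolution.Hom (P k') (P k) (qmap J h) :=
      { hom := φ
        hom_f_zero_comp_π_f_zero := by
          rw [hφ, ChainComplex.single₀_map_f_zero]; rfl }
    rw [(hr.map (qmap J h) φ hφ).zero_iff, ProjectiveResolution.mk₀_comp_extMk c _ rfl hc Φ,
      proj_extMk_zero]
  constructor
  · intro H k ξ
    obtain ⟨c, hc, rfl⟩ := (P k).extMk_surjective ξ (n + 1) rfl
    obtain ⟨ξ', hξ'⟩ := OldRep.of_closed (P k) c hc
    obtain ⟨k', h, h0⟩ := H k ξ'
    exact ⟨k', h, (key h c hc ξ' hξ').mp h0⟩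
  · intro H k ξ
    obtain ⟨c, hc⟩ := OldRep.exists (P k) ξ
    obtain ⟨k', h, h0⟩ := H k ((P k).extMk c (n + 1) rfl hc.closed)
    exact ⟨k', h, (key h c hc.closed ξ hc).mpr h0⟩

/-- Vanishing of local cohomology, computed on an injective resolution. -/
lemma lc_subsingleton_iff (J : Ideal R) (I : InjectiveResolution M) :
    Subsingleton ((localCohomology J n).obj M) ↔
    ∀ (k : ℕ) (z : I.cocomplex.X n), (I.cocomplex.d n (n + 1)).hom z = 0 →
      (∀ r ∈ J ^ k, r • z = 0) →
      ∃ (k' : ℕ) (y : I.cocomplex.X (n - 1)), (∀ r ∈ J ^ k', r • y = 0) ∧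
        (I.cocomplex.d (n - 1) n).hom y = z := by
  rw [lc_subsingleton_iff_ext, ext_old_new]
  constructor
  · intro H k z hz hk
    let f : ModuleCat.of R (R ⧸ J ^ k) ⟶ I.cocomplex.X n := ModuleCat.ofHom
      (Submodule.liftQ (J ^ k) (LinearMap.toSpanSingleton R _ z) (fun r hr => hk r hr))
    have hf : f ≫ I.cocomplex.d n (n + 1) = 0 := by
      apply ModuleCat.hom_ext
      apply Submodule.linearMap_qext
      ext
      change (I.cocomplex.d n (n + 1)).hom ((1 : R) • z) = 0
      rw [one_smul, hz]
    obtain ⟨k', h, h0⟩ := H k (I.extMk f (n + 1) rfl hf)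
    rw [InjectiveResolution.mk₀_comp_extMk, inj_extMk_zero] at h0
    obtain ⟨g, hg⟩ := h0
    refine ⟨k', g.hom (Submodule.Quotient.mk 1), ?_, ?_⟩
    · intro r hr
      rw [← map_smul, ← Submodule.Quotient.mk_smul]
      have : (Submodule.Quotient.mk (r • (1:R)) : R ⧸ J ^ k') = 0 := by
        rw [Submodule.Quotient.mk_eq_zero]; simpa using hr
      rw [this, map_zero]
    · have := congrArg (fun a => a.hom (Submodule.Quotient.mk (1 : R))) hg
      refine this.trans ?_
      change (1 : R) • z = z
      exact one_smul _ _
  · intro H k ξ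
    obtain ⟨f, hf, rfl⟩ := I.extMk_surjective ξ (n + 1) rfl
    obtain ⟨k', y, hy, hyz⟩ := H k (f.hom (Submodule.Quotient.mk 1))
      (congrArg (fun a => a.hom (Submodule.Quotient.mk (1 : R))) hf) (by
        intro r hr
        rw [← map_smul, ← Submodule.Quotient.mk_smul]
        have : (Submodule.Quotient.mk (r • (1:R)) : R ⧸ J ^ k) = 0 := by
          rw [Submodule.Quotient.mk_eq_zero]; simpa using hr
        rw [this, map_zero])
    refine ⟨max k k', le_max_left _ _, ?_⟩
    rw [InjectiveResolution.mk₀_comp_extMk, inj_extMk_zero]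
    refine ⟨ModuleCat.ofHom (Submodule.liftQ (J ^ (max k k')) (LinearMap.toSpanSingleton R _ y)
      (fun r hr => hy r (Ideal.pow_le_pow_right (le_max_right _ _) hr))), ?_⟩
    apply ModuleCat.hom_ext
    apply Submodule.linearMap_qext
    ext
    change (I.cocomplex.d (n - 1) n).hom ((1 : R) • y) = f.hom (Submodule.Quotient.mk 1)
    rw [one_smul, hyz]

end ExtBridge3
end FA

/-! ### Part B: elementwise computation of top local cohomology from an injective resolution -/

namespace FA

section Cech

variable {R : Type u} [CommRing R]

/-- `v` is torsion with respect to `x 0, …, x (i-1)`. -/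
def Tor (x : ℕ → R) (i : ℕ) {N : Type u} [AddCommGroup N] [Module R N] (v : N) : Prop :=
  ∀ j < i, ∃ k : ℕ, x j ^ k • v = 0

section basic
variable {x : ℕ → R} {i : ℕ} {N N' : Type u} [AddCommGroup N] [Module R N]
  [AddCommGroup N'] [Module R N']

lemma Tor.add {v v' : N} (h : Tor x i v) (h' : Tor x i v') : Tor x i (v + v') := by
  intro j hj
  obtain ⟨k, hk⟩ := h j hj
  obtain ⟨k', hk'⟩ := h' j hj
  refine ⟨k + k', ?_⟩
  rw [smul_add, pow_add, mul_smul, mul_smul, hk', smul_comm, hk]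
  simp

lemma Tor.smul {v : N} (h : Tor x i v) (r : R) : Tor x i (r • v) := by
  intro j hj
  obtain ⟨k, hk⟩ := h j hj
  exact ⟨k, by rw [smul_comm, hk, smul_zero]⟩

lemma Tor.neg {v : N} (h : Tor x i v) : Tor x i (-v) := by
  simpa using h.smul (-1)

lemma Tor.sub {v v' : N} (h : Tor x i v) (h' : Tor x i v') : Tor x i (v - v') := by
  rw [sub_eq_add_neg]; exact h.add h'.neg

lemma Tor.map {v : N} (h : Tor x i v) (f : N →ₗ[R] N') : Tor x i (f v) := by
  intro j hj
  obtain ⟨k, hk⟩ := h j hj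
  exact ⟨k, by rw [← map_smul, hk, map_zero]⟩

lemma Tor.zero : Tor x i (0 : N) := fun _ _ => ⟨0, by simp⟩

lemma Tor.mono {v : N} {i' : ℕ} (h : Tor x i v) (hi : i' ≤ i) : Tor x i' v :=
  fun j hj => h j (hj.trans_le hi)

lemma Tor.succ {v : N} (h : Tor x i v) {k : ℕ} (hk : x i ^ k • v = 0) : Tor x (i + 1) v := by
  intro j hj
  rcases Nat.lt_succ_iff_lt_or_eq.mp hj with h' | rfl
  · exact h j h'
  · exact ⟨k, hk⟩

lemma Tor.ann {v : N} (h : Tor x i v) : ∃ a : Ideal R, (∀ r ∈ a, r • v = 0) ∧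
    ∀ (v' : N), (∀ r ∈ a, r • v' = 0) → Tor x i v' := by
  refine ⟨LinearMap.ker (LinearMap.toSpanSingleton R N v), fun r hr => by simpa using hr, ?_⟩
  intro v' hv' j hj
  obtain ⟨k, hk⟩ := h j hj
  exact ⟨k, hv' _ (by simpa using hk)⟩

lemma Tor.div [IsNoetherianRing R] (hI : Module.Baer R N) {v : N} (h : Tor x i v) (r : R) (k : ℕ) :
    ∃ (l : ℕ) (v' : N), Tor x i v' ∧ r ^ (k + l) • v' = r ^ l • v := by
  obtain ⟨a, ha, ha'⟩ := h.ann
  -- stabilisation of `a : r^l`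
  let c : ℕ →o Ideal R :=
    { toFun := fun l => Submodule.comap (LinearMap.mulLeft R (r ^ l)) a
      monotone' := by
        intro l l' hl s hs
        simp only [Submodule.mem_comap, LinearMap.mulLeft_apply] at hs ⊢
        obtain ⟨e, rfl⟩ := Nat.exists_eq_add_of_le hl
        rw [pow_add, mul_comm (r ^ l), mul_assoc]
        exact a.mul_mem_left _ hs }
  obtain ⟨l, hl⟩ := monotone_stabilizes_iff_noetherian.mpr (inferInstance : IsNoetherian R R) c
  have key : ∀ s, r ^ (k + l) * s ∈ a → s • (r ^ l • v) = 0 := by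
    intro s hs
    have h1 : s ∈ c (k + l) := hs
    rw [← hl (k + l) (by omega)] at h1
    have h2 : r ^ l * s ∈ a := h1
    rw [smul_smul, mul_comm]
    exact ha _ h2
  -- the map on `R →  R/a`, multiplication by `r^(k+l)`
  let f : R →ₗ[R] R ⧸ a := LinearMap.toSpanSingleton R (R ⧸ a) (Submodule.Quotient.mk (r ^ (k + l)))
  let g : R →ₗ[R] N := LinearMap.toSpanSingleton R N (r ^ l • v)
  have hfg : LinearMap.ker f ≤ LinearMap.ker g := by
    intro s hs
    simp only [LinearMap.mem_ker, f, g, LinearMap.toSpanSingleton_apply] at hs ⊢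
    apply key
    rw [← Submodule.Quotient.mk_smul, Submodule.Quotient.mk_eq_zero] at hs
    rw [mul_comm]; exact hs
  have hinj : Module.Injective R N := hI.injective
  -- factor through the range
  let g' : LinearMap.range f →ₗ[R] N :=
    (LinearMap.ker f).liftQ g hfg ∘ₗ f.quotKerEquivRange.symm.toLinearMap
  obtain ⟨G, hG⟩ := hinj.out (LinearMap.range f).subtype Subtype.val_injective g'
  refine ⟨l, G (Submodule.Quotient.mk 1), ha' _ ?_, ?_⟩
  · intro s hs
    rw [← map_smul, ← Submodule.Quotient.mk_smul]
    have : (Submodule.Quotient.mk (s • (1:R)) : R ⧸ a) = 0 := by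
      rw [Submodule.Quotient.mk_eq_zero]; simpa using hs
    rw [this, map_zero]
  · have h1 : f 1 = r ^ (k + l) • Submodule.Quotient.mk (p := a) (1 : R) := by
      simp only [f, LinearMap.toSpanSingleton_apply, one_smul]
      rw [← Submodule.Quotient.mk_smul]; simp
    rw [← map_smul, ← h1]
    have h2 := hG ⟨f 1, LinearMap.mem_range_self f 1⟩
    simp only [Submodule.subtype_apply] at h2
    rw [h2]
    have h3 : (f.quotKerEquivRange.symm ⟨f 1, LinearMap.mem_range_self f 1⟩)
        = Submodule.Quotient.mk 1 := by
      rw [LinearEquiv.symm_apply_eq]; rfl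
    simp only [g', LinearMap.comp_apply, LinearEquiv.coe_coe, h3]
    change g 1 = _
    simp [g]

end basic

variable {I : ℕ → Type u} [∀ i, AddCommGroup (I i)] [∀ i, Module R (I i)]
  (δ : ∀ i, I i →ₗ[R] I (i + 1)) {M : Type u} [AddCommGroup M] [Module R M] (ι : M →ₗ[R] I 0)

/-- coboundaries with torsion -/
def Bd (x : ℕ → R) : ∀ i, I i → Prop
  | 0, z => z = 0
  | i + 1, z => ∃ v : I i, Tor x (i + 1) v ∧ δ i v = z

/-- `z` represents the class `[m; x^k]`. -/
def Rep (x : ℕ → R) : ∀ i, ℕ → M → I i → Prop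
  | 0, _, m, z => z = ι m
  | i + 1, k, m, z => ∃ z' : I i, Rep x i k m z' ∧ ∃ y : I i, Tor x i y ∧ x i ^ k • y = z' ∧ δ i y = z

/-- `m ∈ (x 0 ^ k, …, x (i-1) ^ k) M`. -/
def Den (x : ℕ → R) : ∀ _ : ℕ, ℕ → M → Prop
  | 0, _, m => m = 0
  | i + 1, k, m => ∃ m₁ m₂ : M, Den x i k m₁ ∧ m = m₁ + x i ^ k • m₂

/-- product of first elements -/
def W (x : ℕ → R) (i : ℕ) : R := ∏ j ∈ Finset.range i, x j

variable {δ ι} {x : ℕ → R}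

lemma W_succ (i : ℕ) : W x (i + 1) = W x i * x i := Finset.prod_range_succ _ _

lemma Rep.add {i k : ℕ} : ∀ {m m' : M} {z z' : I i}, Rep δ ι x i k m z → Rep δ ι x i k m' z' →
    Rep δ ι x i k (m + m') (z + z') := by
  induction i with
  | zero => rintro m m' z z' h h'; simp only [Rep] at *; rw [h, h', map_add]
  | succ i ih =>
    rintro m m' _ _ ⟨z, hz, y, hy, hyz, rfl⟩ ⟨z', hz', y', hy', hyz', rfl⟩
    exact ⟨z + z', ih hz hz', y + y', hy.add hy', by rw [smul_add, hyz, hyz'], map_add _ _ _⟩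

lemma Rep.smul {i k : ℕ} (r : R) : ∀ {m : M} {z : I i}, Rep δ ι x i k m z →
    Rep δ ι x i k (r • m) (r • z) := by
  induction i with
  | zero => rintro m z h; simp only [Rep] at *; rw [h, map_smul]
  | succ i ih =>
    rintro m _ ⟨z, hz, y, hy, hyz, rfl⟩
    exact ⟨r • z, ih hz, r • y, hy.smul r, by rw [smul_comm, hyz], map_smul _ _ _⟩

lemma Rep.sub {i k : ℕ} {m m' : M} {z z' : I i} (h : Rep δ ι x i k m z) (h' : Rep δ ι x i k m' z') :
    Rep δ ι x i k (m - m') (z - z') := by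
  have := h.add (h'.smul (-1))
  simpa [sub_eq_add_neg] using this

lemma Rep.raise {i k : ℕ} (l : ℕ) : ∀ {m : M} {z : I i}, Rep δ ι x i k m z →
    Rep δ ι x i (k + l) (W x i ^ l • m) z := by
  induction i with
  | zero => rintro m z h; simpa [Rep, W] using h
  | succ i ih =>
    rintro m _ ⟨z, hz, y, hy, hyz, rfl⟩
    refine ⟨x i ^ l • z, ?_, y, hy, ?_, rfl⟩
    · rw [W_succ, mul_pow, mul_comm, mul_smul]
      exact (ih hz).smul _
    · rw [← hyz, add_comm k l, pow_add, mul_smul]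

lemma Rep.closed (hδ : ∀ i (y : I i), δ (i + 1) (δ i y) = 0) (hι : ∀ m, δ 0 (ι m) = 0) {i k : ℕ}
    {m : M} {z : I i} (h : Rep δ ι x i k m z) : δ i z = 0 := by
  cases i with
  | zero => simp only [Rep] at h; rw [h]; exact hι _
  | succ i => obtain ⟨_, _, y, _, _, rfl⟩ := h; exact hδ _ _

lemma Rep.tor (hδ : ∀ i (y : I i), δ (i + 1) (δ i y) = 0) (hι : ∀ m, δ 0 (ι m) = 0) {i k : ℕ}
    {m : M} {z : I i} (h : Rep δ ι x i k m z) : Tor x i z := by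
  cases i with
  | zero => intro j hj; omega
  | succ i =>
    obtain ⟨z', hz', y, hy, hyz, rfl⟩ := h
    refine (hy.map (δ i)).succ (k := k) ?_
    rw [← map_smul, hyz, hz'.closed hδ hι]

lemma Bd.div [IsNoetherianRing R] (hI : ∀ i, Module.Baer R (I i)) {i : ℕ} {z : I i} (h : Bd δ x i z) (k : ℕ) :
    ∃ (l : ℕ) (z' : I i), Bd δ x i z' ∧ x i ^ (k + l) • z' = x i ^ l • z := by
  cases i with
  | zero => simp only [Bd] at h; subst h; exact ⟨0, 0, rfl, by simp⟩
  | succ i =>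
    obtain ⟨v, hv, rfl⟩ := h
    obtain ⟨l, v', hv', h⟩ := hv.div (hI i) (x (i + 1)) k
    exact ⟨l, δ i v', ⟨v', hv', rfl⟩, by rw [← map_smul, h, map_smul]⟩

lemma Bd.tor {i : ℕ} {z : I i} (h : Bd δ x i z) : Tor x i z := by
  cases i with
  | zero => intro j hj; omega
  | succ i => obtain ⟨v, hv, rfl⟩ := h; exact hv.map _

lemma Bd.closed (hδ : ∀ i (y : I i), δ (i + 1) (δ i y) = 0) {i : ℕ} {z : I i} (h : Bd δ x i z) :
    δ i z = 0 := by
  cases i with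
  | zero => simp only [Bd] at h; rw [h, map_zero]
  | succ i => obtain ⟨v, hv, rfl⟩ := h; exact hδ _ _

lemma vanish [IsNoetherianRing R] (hI : ∀ i, Module.Baer R (I i)) (hδ : ∀ i (y : I i), δ (i + 1) (δ i y) = 0)
    (hex : ∀ i (z : I (i + 1)), δ (i + 1) z = 0 → ∃ y, δ i y = z) (i : ℕ) :
    ∀ j, i ≤ j → ∀ z : I (j + 1), δ (j + 1) z = 0 → Tor x i z → ∃ y : I j, Tor x i y ∧ δ j y = z := by
  induction i with
  | zero =>
    intro j _ z hz _
    obtain ⟨y, hy⟩ := hex j z hz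
    exact ⟨y, fun j hj => by omega, hy⟩
  | succ i ih =>
    intro j hj z hz ht
    obtain ⟨y, hy, rfl⟩ := ih j (by omega) z hz (ht.mono (by omega))
    obtain ⟨j, rfl⟩ : ∃ j', j = j' + 1 := ⟨j - 1, by omega⟩
    obtain ⟨k, hk⟩ := ht i (by omega)
    obtain ⟨v, hv, hv'⟩ := ih j (by omega) (x i ^ k • y) (by rw [map_smul, hk]) (hy.smul _)
    obtain ⟨l, v', ht', h'⟩ := hv.div (hI j) (x i) k
    refine ⟨y - δ j v', (hy.sub (ht'.map _)).succ (k := k + l) ?_, ?_⟩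
    · rw [smul_sub, ← map_smul, h', map_smul, hv', smul_smul, ← pow_add, add_comm l k, sub_self]
    · rw [map_sub, hδ, sub_zero]

lemma Rep.exists_rep [IsNoetherianRing R] (hI : ∀ i, Module.Baer R (I i)) (hδ : ∀ i (y : I i), δ (i + 1) (δ i y) = 0)
    (hι : ∀ m, δ 0 (ι m) = 0) (i k : ℕ) :
    ∀ m : M, ∃ (l : ℕ) (z : I i), Rep δ ι x i (k + l) (W x i ^ l • m) z := by
  induction i with
  | zero => intro m; exact ⟨0, ι m, by simp [Rep]⟩
  | succ i ih =>
    intro m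
    obtain ⟨l, z, hz⟩ := ih m
    obtain ⟨l', y, hy, hyz⟩ := (hz.tor hδ hι).div (hI i) (x i) (k + l)
    refine ⟨l + l', δ i (x i ^ l • y), x i ^ (l + l') • z, ?_, x i ^ l • y, hy.smul _, ?_, rfl⟩
    · have := (hz.raise l').smul (x i ^ (l + l'))
      rw [W_succ, mul_pow, mul_comm, mul_smul, pow_add (W x i), mul_comm (W x i ^ l), mul_smul,
        ← add_assoc]
      exact this
    · rw [smul_comm, ← add_assoc, hyz, smul_smul, ← pow_add]

lemma Rep.surj [IsNoetherianRing R] (hI : ∀ i, Module.Baer R (I i)) (hδ : ∀ i (y : I i), δ (i + 1) (δ i y) = 0)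
    (hex : ∀ i (z : I (i + 1)), δ (i + 1) z = 0 → ∃ y, δ i y = z)
    (hex0 : ∀ z : I 0, δ 0 z = 0 → ∃ m, ι m = z) (i : ℕ) :
    ∀ z : I i, δ i z = 0 → Tor x i z → ∃ k m, Rep δ ι x i k m z := by
  induction i with
  | zero =>
    intro z hz _
    obtain ⟨m, rfl⟩ := hex0 z hz
    exact ⟨0, m, rfl⟩
  | succ i ih =>
    intro z hz ht
    obtain ⟨y, hy, rfl⟩ := vanish hI hδ hex i i le_rfl z hz (ht.mono (by omega))
    obtain ⟨k, hk⟩ := ht i (by omega)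
    obtain ⟨k', m, hm⟩ := ih (x i ^ k • y) (by rw [map_smul, hk]) (hy.smul _)
    -- common exponent `k + k'`
    refine ⟨k + k', W x i ^ k • (x i ^ k' • m), x i ^ k' • (x i ^ k • y), ?_, y, hy, ?_, rfl⟩
    · have := (hm.smul (x i ^ k')).raise k
      rwa [add_comm] at this
    · rw [smul_smul, ← pow_add, add_comm]

lemma Den.smul {i k : ℕ} (r : R) : ∀ {m : M}, Den x i k m → Den x i k (r • m) := by
  induction i with
  | zero => rintro m h; simp only [Den] at *; simp [h]
  | succ i ih =>
    rintro m ⟨m₁, m₂, h₁, rfl⟩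
    exact ⟨r • m₁, r • m₂, ih h₁, by rw [smul_add, smul_comm r]⟩

lemma Den.raise {i k : ℕ} (l : ℕ) : ∀ {m : M}, Den x i k m → Den x i (k + l) (W x i ^ l • m) := by
  induction i with
  | zero => rintro m h; simp only [Den] at *; simp [h]
  | succ i ih =>
    rintro m ⟨m₁, m₂, h₁, rfl⟩
    refine ⟨x i ^ l • W x i ^ l • m₁, W x i ^ l • m₂, (ih h₁).smul _, ?_⟩
    rw [W_succ, smul_add, smul_smul, smul_smul, smul_smul]
    congr 2 <;> ring

lemma Rep.conv [IsNoetherianRing R] (hI : ∀ i, Module.Baer R (I i)) (hδ : ∀ i (y : I i), δ (i + 1) (δ i y) = 0)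
    (hι : ∀ m, δ 0 (ι m) = 0) (i : ℕ) :
    ∀ k m (z : I i), Rep δ ι x i k m z → Den x i k m → Bd δ x i z := by
  induction i with
  | zero => intro k m z h h'; simp only [Rep, Den, Bd] at *; rw [h, h', map_zero]
  | succ i ih =>
    rintro k _ _ ⟨z', hz', y, hy, hyz, rfl⟩ ⟨m₁, m₂, h₁, rfl⟩
    obtain ⟨l, z₂, hz₂⟩ := Rep.exists_rep (x := x) hI hδ hι i k m₂
    have hr : Rep δ ι x i (k + l) (W x i ^ l • m₁) (z' - x i ^ k • z₂) := by
      have := (hz'.raise l).sub (hz₂.smul (x i ^ k))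
      rw [smul_add, smul_comm (x i ^ k), add_sub_cancel_right] at this
      exact this
    obtain ⟨l', v', hv', h'⟩ := (ih _ _ _ hr (h₁.raise l)).div hI k
    refine ⟨y - z₂ - v', ((hy.sub (hz₂.tor hδ hι)).sub hv'.tor).succ (k := k + l') ?_, ?_⟩
    · rw [smul_sub, h', smul_sub, smul_sub, add_comm, pow_add, mul_smul, mul_smul, hyz, sub_self]
    · rw [map_sub, map_sub, hz₂.closed hδ hι, hv'.closed hδ]; simp

lemma Rep.zero_den [IsNoetherianRing R] (hI : ∀ i, Module.Baer R (I i)) (hδ : ∀ i (y : I i), δ (i + 1) (δ i y) = 0)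
    (hex : ∀ i (z : I (i + 1)), δ (i + 1) z = 0 → ∃ y, δ i y = z)
    (hex0 : ∀ z : I 0, δ 0 z = 0 → ∃ m, ι m = z) (hinj : Function.Injective ι)
    (hι : ∀ m, δ 0 (ι m) = 0) (i : ℕ) :
    ∀ k m (z : I i), Rep δ ι x i k m z → Bd δ x i z → ∃ l, Den x i (k + l) (W x i ^ l • m) := by
  induction i with
  | zero =>
    intro k m z h h'
    simp only [Rep, Den, Bd] at *
    refine ⟨0, ?_⟩
    rw [h'] at h
    have : m = 0 := hinj (by rw [← h, map_zero])
    simp [this]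
  | succ i ih =>
    rintro k m _ ⟨z', hz', y, hy, hyz, rfl⟩ ⟨v, hv, hvy⟩
    obtain ⟨l, hl⟩ := hv i (by omega)
    obtain ⟨k', m', hm'⟩ := Rep.surj (x := x) hI hδ hex hex0 i (y - v)
      (by rw [map_sub, hvy, sub_self]) (hy.sub (hv.mono (by omega)))
    -- `x^(k+l) (y - v) = x^l z'`
    have h1 := ((hm'.raise k).smul (x i ^ (k + l))).sub
      ((add_comm k k') ▸ ((hz'.raise k').smul (x i ^ l)))
    have h2 : x i ^ (k + l) • (y - v) - x i ^ l • z' = 0 := by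
      rw [smul_sub, pow_add, mul_smul _ _ v, hl, smul_zero, sub_zero, mul_comm, mul_smul, hyz,
        sub_self]
    rw [h2] at h1
    have hb : Bd δ x i 0 := by
      cases i with
      | zero => rfl
      | succ i => exact ⟨0, Tor.zero, map_zero _⟩
    obtain ⟨l', h3⟩ := ih _ _ _ h1 hb
    -- exponent k' + k + l'
    refine ⟨k' + l' + l, ?_⟩
    have h4 := (h3.smul (-(x i ^ (k' + l')))).raise l
    refine ⟨W x i ^ l • -x i ^ (k' + l') • W x i ^ l' •
      (x i ^ (k + l) • W x i ^ k • m' - x i ^ l • W x i ^ k' • m),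
      W x i ^ l • W x i ^ l' • W x i ^ k • m', ?_, ?_⟩
    · have e : k + (k' + l' + l) = k' + k + l' + l := by ring
      rw [e]; exact h4
    · simp only [W_succ, smul_sub, smul_smul, neg_smul, smul_neg, sub_neg_eq_add, neg_mul, mul_neg,
        neg_sub, mul_pow]
      module
end Cech

end FA
namespace FA
section ExtBridge4
open CategoryTheory CategoryTheory.Limits

variable {R : Type u} [CommRing R] [IsNoetherianRing R]

lemma tor_iff {d : ℕ} (x : Fin d → R) (J : Ideal R) (hJ : (Ideal.span (Set.range x)).radical = J)
    {N : Type u} [AddCommGroup N] [Module R N] (v : N) :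
    Tor (fun j => if h : j < d then x ⟨j, h⟩ else 1) d v ↔ ∃ k, ∀ r ∈ J ^ k, r • v = 0 := by
  constructor
  · intro h
    have h' : ∀ i : Fin d, ∃ k, x i ^ k • v = 0 := fun i => by simpa [i.2] using h i i.2
    choose k hk using h'
    have : J ≤ Ideal.radical (LinearMap.ker (LinearMap.toSpanSingleton R N v)) := by
      rw [← hJ]
      apply Ideal.radical_le_radical_iff.mpr
      rw [Ideal.span_le]
      rintro _ ⟨i, rfl⟩
      exact ⟨k i, by simpa using hk i⟩
    obtain ⟨e, he⟩ := Ideal.exists_pow_le_of_le_radical_of_fg this (IsNoetherian.noetherian _)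
    exact ⟨e, fun r hr => by simpa using he hr⟩
  · rintro ⟨k, hk⟩ j hj
    refine ⟨k, hk _ ?_⟩
    apply Ideal.pow_mem_pow
    rw [← hJ]
    simp only [hj, dif_pos]
    exact Ideal.le_radical (Ideal.subset_span ⟨_, rfl⟩)

lemma W_eq {d : ℕ} (x : Fin d → R) :
    W (fun j => if h : j < d then x ⟨j, h⟩ else 1) d = ∏ i, x i := by
  rw [W, Finset.prod_range]
  simp

lemma den_iff {d : ℕ} (x : ℕ → R) (k : ℕ) {M : Type u} [AddCommGroup M] [Module R M] :
    ∀ m : M, Den x d k m ↔ ∃ c : Fin d → M, m = ∑ i : Fin d, x i ^ k • c i := by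
  induction d with
  | zero => intro m; simp [Den]
  | succ d ih =>
    intro m
    simp only [Den]
    constructor
    · rintro ⟨m₁, m₂, h, rfl⟩
      obtain ⟨c, rfl⟩ := (ih _).mp h
      refine ⟨Fin.snoc c m₂, ?_⟩
      rw [Fin.sum_univ_castSucc]
      simp
    · rintro ⟨c, rfl⟩
      refine ⟨∑ i : Fin d, x i ^ k • c i.castSucc, c (Fin.last d), (ih _).mpr ⟨_, rfl⟩, ?_⟩
      rw [Fin.sum_univ_castSucc]
      simp

lemma den_iff' {d : ℕ} (x : Fin d → R) (k : ℕ) {M : Type u} [AddCommGroup M] [Module R M] (m : M) :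
    Den (fun j => if h : j < d then x ⟨j, h⟩ else 1) d k m ↔
      ∃ c : Fin d → M, m = ∑ i, x i ^ k • c i := by
  rw [den_iff]; simp

variable {d : ℕ} (x : Fin d → R) (J : Ideal R)
  (M : ModuleCat.{u} R)

lemma bd_iff (I : InjectiveResolution M) (x : ℕ → R) (z : I.cocomplex.X d) :
    Bd (I := fun i => I.cocomplex.X i) (fun i => (I.cocomplex.d i (i + 1)).hom) x d z ↔
    ∃ y : I.cocomplex.X (d - 1), Tor x d y ∧ (I.cocomplex.d (d - 1) d).hom y = z := by
  cases d with
  | zero =>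
    have h0 : I.cocomplex.d 0 0 = 0 := I.cocomplex.shape _ _ (by simp)
    change z = 0 ↔ ∃ y : I.cocomplex.X 0, Tor x 0 y ∧ (I.cocomplex.d 0 0).hom y = z
    rw [h0]
    constructor
    · rintro rfl; exact ⟨0, Tor.zero, rfl⟩
    · rintro ⟨y, _, rfl⟩; rfl
  | succ d => rfl

lemma lc_iff_bd (hJ : (Ideal.span (Set.range x)).radical = J)
    (M : ModuleCat.{u} R) (I : InjectiveResolution M) :
    Subsingleton ((localCohomology J d).obj M) ↔
    ∀ z : I.cocomplex.X d, (I.cocomplex.d d (d + 1)).hom z = 0 →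
      Tor (fun j => if h : j < d then x ⟨j, h⟩ else 1) d z →
      Bd (I := fun i => I.cocomplex.X i) (fun i => (I.cocomplex.d i (i + 1)).hom)
        (fun j => if h : j < d then x ⟨j, h⟩ else 1) d z := by
  rw [lc_subsingleton_iff J I]
  constructor
  · intro H z hz ht
    obtain ⟨k, hk⟩ := (tor_iff x J hJ z).mp ht
    obtain ⟨k', y, hy, hyz⟩ := H k z hz hk
    exact (bd_iff M I _ z).mpr ⟨y, (tor_iff x J hJ y).mpr ⟨k', hy⟩, hyz⟩
  · intro H k z hz hk
    obtain ⟨y, hy, hyz⟩ := (bd_iff M I _ z).mp (H z hz ((tor_iff x J hJ z).mpr ⟨k, hk⟩))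
    obtain ⟨k', hk'⟩ := (tor_iff x J hJ y).mp hy
    exact ⟨k', y, hk', hyz⟩

lemma res_baer (I : InjectiveResolution M) (i : ℕ) : Module.Baer R (I.cocomplex.X i) := by
  have : Injective (I.cocomplex.X i) := I.injective i
  have : Module.Injective R (I.cocomplex.X i) := Module.injective_module_of_injective_object R _
  exact Module.Baer.of_injective this

lemma res_dd (I : InjectiveResolution M) (i : ℕ) (y : I.cocomplex.X i) :
    (I.cocomplex.d (i + 1) (i + 2)).hom ((I.cocomplex.d i (i + 1)).hom y) = 0 :=
  congrArg (fun k => k.hom y) (I.cocomplex.d_comp_d i (i + 1) (i + 2))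

lemma res_ex (I : InjectiveResolution M) (i : ℕ) (z : I.cocomplex.X (i + 1))
    (hz : (I.cocomplex.d (i + 1) (i + 2)).hom z = 0) : ∃ y, (I.cocomplex.d i (i + 1)).hom y = z :=
  (ShortComplex.moduleCat_exact_iff _).mp (I.exact_succ i) z hz

/-- the augmentation -/
noncomputable def resι (I : InjectiveResolution M) : M →ₗ[R] I.cocomplex.X 0 := (I.ι.f 0).hom

lemma res_d0 (I : InjectiveResolution M) (m : M) :
    (I.cocomplex.d 0 1).hom (resι M I m) = 0 :=
  congrArg (fun k => k.hom m) I.ι_f_zero_comp_complex_d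

lemma res_ex0 (I : InjectiveResolution M) (z : I.cocomplex.X 0)
    (hz : (I.cocomplex.d 0 1).hom z = 0) : ∃ y : M, resι M I y = z :=
  (ShortComplex.moduleCat_exact_iff _).mp I.exact₀ z hz

lemma res_inj (I : InjectiveResolution M) :
    Function.Injective (fun m : M => resι M I m) :=
  (ModuleCat.mono_iff_injective (I.ι.f 0)).mp inferInstance

lemma lc_zero (hJ : (Ideal.span (Set.range x)).radical = J)
    (M : ModuleCat.{u} R) (H : Subsingleton ((localCohomology J d).obj M)) (m : M) :
    ∃ (l : ℕ) (c : Fin d → M), (∏ i, x i) ^ l • m = ∑ i, x i ^ (1 + l) • c i := by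
  let I := InjectiveResolution.of M
  rw [lc_iff_bd x J hJ M I] at H
  obtain ⟨l, z, hz⟩ := Rep.exists_rep (I := fun i => I.cocomplex.X i)
    (δ := fun i => (I.cocomplex.d i (i + 1)).hom)
    (x := (fun j => if h : j < d then x ⟨j, h⟩ else 1)) (ι := resι M I) (res_baer M I) (res_dd M I)
      (res_d0 M I) d 1 m
  have hb := H z (hz.closed (res_dd M I) (res_d0 M I)) (hz.tor (res_dd M I) (res_d0 M I))
  obtain ⟨l', h⟩ := Rep.zero_den (res_baer M I) (res_dd M I) (res_ex M I) (res_ex0 M I) (res_inj M I)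
    (res_d0 M I) d _ _ z hz hb
  rw [W_eq, smul_smul, ← pow_add, den_iff'] at h
  refine ⟨l' + l, ?_⟩
  rw [add_comm l' l] at h ⊢
  rwa [add_assoc] at h

lemma lc_ne_zero (hJ : (Ideal.span (Set.range x)).radical = J)
    (M : ModuleCat.{u} R) (H : ¬ Subsingleton ((localCohomology J d).obj M)) :
    ∃ (k : ℕ) (m : M), ∀ l : ℕ, ¬ ∃ (c : Fin d → M),
      (∏ i, x i) ^ l • m = ∑ i, x i ^ (k + l) • c i := by
  let I := InjectiveResolution.of M
  rw [lc_iff_bd x J hJ M I] at H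
  push Not at H
  obtain ⟨z, hz, ht, hb⟩ := H
  obtain ⟨k, m, hr⟩ := Rep.surj (I := fun i => I.cocomplex.X i)
    (δ := fun i => (I.cocomplex.d i (i + 1)).hom)
    (x := (fun j => if h : j < d then x ⟨j, h⟩ else 1)) (ι := resι M I) (res_baer M I) (res_dd M I)
    (res_ex M I) (res_ex0 M I) d z hz ht
  refine ⟨k, m, fun l hl => hb ?_⟩
  rw [← W_eq, ← den_iff'] at hl
  exact Rep.conv (res_baer M I) (res_dd M I) (res_d0 M I) d _ _ z (hr.raise l) hl

end ExtBridge4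
end FA

/-! ### Part C: quasilength filtrations as chains of ideals -/

namespace FA
section Chains

variable {S : Type u} [CommRing S]

/-- The ideal generated by `K` and `m 0, …, m (j-1)`. -/
def Lm (K : Ideal S) (m : ℕ → S) (j : ℕ) : Ideal S := K ⊔ Ideal.span (m '' Set.Iio j)

lemma Lm_zero (K : Ideal S) (m : ℕ → S) : Lm K m 0 = K := by simp [Lm]

lemma Lm_succ (K : Ideal S) (m : ℕ → S) (j : ℕ) :
    Lm K m (j + 1) = Lm K m j ⊔ Ideal.span {m j} := by
  have : Set.Iio (j + 1) = Set.Iio j ∪ {j} := by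
    ext a; simp
  rw [Lm, Lm, this, Set.image_union, Ideal.span_union, Set.image_singleton, sup_assoc]

lemma Lm_mono (K : Ideal S) (m : ℕ → S) : Monotone (Lm K m) :=
  monotone_nat_of_le_succ fun j => by rw [Lm_succ]; exact le_sup_left

lemma le_Lm (K : Ideal S) (m : ℕ → S) (j : ℕ) : K ≤ Lm K m j := le_sup_left

/-- chain version of quasilength filtrations -/
def IsCh (J K : Ideal S) (m : ℕ → S) (h : ℕ) : Prop :=
  (∀ j < h, ∀ a ∈ J, a * m j ∈ Lm K m j) ∧ Lm K m h = ⊤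

lemma IsCh.filtration {J K : Ideal S} {m : ℕ → S} {h : ℕ}
    (H : IsCh J K m h) :
    HasQLFiltration S J (S ⧸ K) h := by
  refine ⟨fun i => Submodule.map K.mkQ (Lm K m i), ?_, ?_, ?_, ?_⟩
  · intro i j hij
    exact Submodule.map_mono (Lm_mono K m hij)
  · simp only [Fin.val_zero, Lm_zero]
    ext y
    simp only [Submodule.mem_map, Submodule.mem_bot]
    constructor
    · rintro ⟨a, ha, rfl⟩; simpa [Ideal.Quotient.eq_zero_iff_mem] using ha
    · rintro rfl; exact ⟨0, zero_mem _, by simp⟩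
  · simp only [Fin.val_last, H.2]
    rw [Submodule.map_top, Submodule.range_mkQ]
  · intro i
    have e : Submodule.map K.mkQ (Lm K m (i.succ : Fin (h + 1))) = Submodule.map K.mkQ (Lm K m i.castSucc) ⊔
        Submodule.span S {K.mkQ (m i)} := by
      simp only [Fin.val_succ, Fin.val_castSucc, Lm_succ]
      rw [Submodule.map_sup, Ideal.span, Submodule.map_span, Set.image_singleton]
    refine ⟨⟨_, e⟩, ?_⟩
    intro a ha y hy
    obtain ⟨b, hb, rfl⟩ := hy
    refine ⟨a * b, ?_, by simp [← smul_eq_mul]⟩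
    simp only [Fin.val_succ, Lm_succ] at hb
    obtain ⟨b₁, h₁, b₂, h₂, rfl⟩ := Submodule.mem_sup.mp hb
    obtain ⟨r, rfl⟩ := Ideal.mem_span_singleton'.mp h₂
    simp only [Fin.val_castSucc]
    rw [mul_add]
    refine add_mem (Ideal.mul_mem_left _ _ h₁) ?_
    rw [mul_left_comm]
    exact Ideal.mul_mem_left _ _ (H.1 i i.2 a ha)

lemma exists_chain {J K : Ideal S} {h : ℕ} (H : HasQLFiltration S J (S ⧸ K) h) :
    ∃ m : ℕ → S, IsCh J K m h := by
  obtain ⟨c, hmono, h0, hl, hc⟩ := H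
  choose m' hm' using fun i => (hc i).1
  choose m'' hm'' using fun i => Submodule.mkQ_surjective K (m' i)
  let m : ℕ → S := fun j => if hj : j < h then m'' ⟨j, hj⟩ else 0
  have key : ∀ j (hj : j < h + 1), Lm K m j = (c ⟨j, hj⟩).comap K.mkQ := by
    intro j
    induction j with
    | zero =>
      intro hj
      rw [Lm_zero]
      have : c ⟨0, hj⟩ = ⊥ := h0
      rw [this]
      ext y; simp
    | succ j ih =>
      intro hj
      have hj' : j < h := by omega
      rw [Lm_succ, ih (by omega)]
      have h1 : c ⟨j + 1, hj⟩ = c ⟨j, by omega⟩ ⊔ Submodule.span S {m' ⟨j, hj'⟩} := hm' ⟨j, hj'⟩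
      rw [h1]
      have h2 : m j = m'' ⟨j, hj'⟩ := by simp [m, hj']
      have h3 : Submodule.map K.mkQ (Ideal.span {m j}) = Submodule.span S {m' ⟨j, hj'⟩} := by
        rw [Ideal.span, Submodule.map_span, Set.image_singleton, h2, hm'']
      apply le_antisymm
      · refine sup_le (Submodule.comap_mono le_sup_left) ?_
        rw [← Submodule.map_le_iff_le_comap, h3]
        exact le_sup_right
      · intro y hy
        obtain ⟨a, ha, b, hb, hab⟩ := Submodule.mem_sup.mp (Submodule.mem_comap.mp hy)
        rw [← h3] at hb
        obtain ⟨b', hb', rfl⟩ := hb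
        rw [show y = (y - b') + b' by ring]
        refine Submodule.add_mem_sup ?_ hb'
        rw [Submodule.mem_comap, map_sub, ← hab, add_sub_cancel_right]
        exact ha
  refine ⟨m, ?_, ?_⟩
  · intro j hj a ha
    rw [key j (by omega), Submodule.mem_comap, ← smul_eq_mul, map_smul]
    refine (hc ⟨j, hj⟩).2 a ha _ ?_
    have : m j ∈ Lm K m (j + 1) := by
      rw [Lm_succ]; exact Ideal.mem_sup_right (Ideal.mem_span_singleton_self _)
    rw [key (j + 1) (by omega)] at this
    exact this
  · rw [key h (by omega)]
    have : c ⟨h, by omega⟩ = ⊤ := hl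
    rw [this, Submodule.comap_top]

end Chains

section Monomials

variable {S : Type u} [CommRing S] {d : ℕ} (x : Fin d → S)

/-- monomials -/
def mon (α : Fin d → ℕ) : S := ∏ i, x i ^ α i

lemma mon_mul (α β : Fin d → ℕ) : mon x α * mon x β = mon x (α + β) := by
  simp [mon, ← Finset.prod_mul_distrib, pow_add]

lemma mon_mem_of_le {α : Fin d → ℕ} {t : ℕ} {i : Fin d} (h : t ≤ α i) :
    mon x α ∈ Ideal.span (Set.range fun i => x i ^ t) := by
  rw [mon, ← Finset.mul_prod_erase _ _ (Finset.mem_univ i)]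
  apply Ideal.mul_mem_right
  obtain ⟨k, hk⟩ := Nat.exists_eq_add_of_le h
  rw [hk, pow_add]
  exact Ideal.mul_mem_right _ _ (Ideal.subset_span ⟨i, rfl⟩)

lemma mon_const (l : ℕ) : mon x (fun _ => l) = (∏ i, x i) ^ l := by
  simp [mon, Finset.prod_pow]

lemma mon_single_mul (α : Fin d → ℕ) (i : Fin d) : x i * mon x α = mon x (α + Pi.single i 1) := by
  rw [← mon_mul, mul_comm]
  congr 1
  rw [mon, Finset.prod_eq_single i] <;> simp +contextual [Pi.single_apply]

lemma fff_mono {t : ℕ} {α β : Fin d → Fin t} (h : α ≤ β) :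
    finFunctionFinEquiv α ≤ finFunctionFinEquiv β := by
  rw [Fin.le_def, finFunctionFinEquiv_apply, finFunctionFinEquiv_apply]
  exact Finset.sum_le_sum fun i _ => Nat.mul_le_mul_right _ (h i)

/-- the `j`-th monomial in decreasing order -/
noncomputable def dmon (t : ℕ) (j : ℕ) : S :=
  if h : t ^ d - 1 - j < t ^ d then
    mon x (fun i => (finFunctionFinEquiv.symm ⟨t ^ d - 1 - j, h⟩ i : ℕ)) else 0

lemma mon_mem_Lm {t j : ℕ} (α : Fin d → Fin t) (h : t ^ d ≤ finFunctionFinEquiv α + j) (hj : j ≤ t ^ d) :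
    mon x (fun i => (α i : ℕ)) ∈ Lm (Ideal.span (Set.range fun i => x i ^ t)) (dmon x t) j := by
  apply Ideal.mem_sup_right
  apply Ideal.subset_span
  have hlt := (finFunctionFinEquiv α).2
  refine ⟨t ^ d - 1 - finFunctionFinEquiv α, by simp only [Set.mem_Iio]; omega, ?_⟩
  have e : t ^ d - 1 - (t ^ d - 1 - (finFunctionFinEquiv α : ℕ)) = finFunctionFinEquiv α := by omega
  simp only [dmon, e]
  rw [dif_pos hlt]
  show mon x (fun i => ((finFunctionFinEquiv.symm ⟨finFunctionFinEquiv α, hlt⟩ i : Fin t) : ℕ)) = _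
  rw [Fin.eta, Equiv.symm_apply_apply]

lemma dmon_chain {t : ℕ} (ht : 0 < t) :
    IsCh (Ideal.span (Set.range x)) (Ideal.span (Set.range fun i => x i ^ t)) (dmon x t) (t ^ d) := by
  constructor
  · intro j hj a ha
    have hlt : t ^ d - 1 - j < t ^ d := by omega
    suffices h : Ideal.span (Set.range x) ≤ Submodule.comap (LinearMap.mulRight S (dmon x t j))
        (Lm (Ideal.span (Set.range fun i => x i ^ t)) (dmon x t) j) by
      simpa using h ha
    rw [Ideal.span_le]
    rintro _ ⟨i, rfl⟩
    simp only [SetLike.mem_coe, Submodule.mem_comap, LinearMap.mulRight_apply]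
    rw [dmon, dif_pos hlt, mon_single_mul]
    set α := finFunctionFinEquiv.symm ⟨t ^ d - 1 - j, hlt⟩ with hα
    by_cases hi : (α i : ℕ) + 1 < t
    · let β : Fin d → Fin t := fun k => if k = i then ⟨α i + 1, hi⟩ else α k
      have hβ : (fun i => (α i : ℕ)) + Pi.single i 1 = fun k => (β k : ℕ) := by
        ext k
        by_cases hk : k = i
        · subst hk; simp [β]
        · simp [β, hk]
      rw [hβ]
      refine mon_mem_Lm x β ?_ hj.le
      have h1 : α ≤ β := by
        intro k
        by_cases hk : k = i
        · subst hk; simp [β, Fin.le_def]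
        · simp [β, hk]
      have h2 : α ≠ β := by
        intro h
        have := congrArg (fun f => (f i : ℕ)) h
        simp [β] at this
      have h3 := (fff_mono h1).lt_of_ne (fun h => h2 (finFunctionFinEquiv.injective h))
      rw [Fin.lt_def, hα, Equiv.apply_symm_apply] at h3
      simp only at h3
      omega
    · exact le_Lm _ _ _ (mon_mem_of_le x (i := i) (by simp; omega))
  · rw [Ideal.eq_top_iff_one]
    have : (1 : S) = mon x (fun i => (((fun _ => ⟨0, ht⟩ : Fin d → Fin t) i : Fin t) : ℕ)) := by simp [mon]
    rw [this]
    exact mon_mem_Lm x _ (by omega) le_rfl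

lemma dmon_zero {t : ℕ} (ht : 0 < t) : dmon x t 0 = (∏ i, x i) ^ (t - 1) := by
  have hpos : 0 < t ^ d := Nat.pow_pos ht
  have hlt : t ^ d - 1 - 0 < t ^ d := by omega
  rw [dmon, dif_pos hlt, ← mon_const]
  congr 1
  ext i
  set α : Fin d → Fin t := finFunctionFinEquiv.symm ⟨t ^ d - 1 - 0, hlt⟩ with hα
  by_contra hne
  let β : Fin d → Fin t := fun k => ⟨t - 1, by omega⟩
  have h1 : α ≤ β := by
    intro k; simp only [β, Fin.le_def]; have := (α k).2; omega
  have h2 : α ≠ β := by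
    intro h
    have := congrArg (fun f => (f i : ℕ)) h
    exact hne this
  have h3 := (fff_mono h1).lt_of_ne (fun h => h2 (finFunctionFinEquiv.injective h))
  rw [Fin.lt_def, hα, Equiv.apply_symm_apply] at h3
  have := (finFunctionFinEquiv β).2
  simp only at h3
  omega

/-- strictness of the monomial chain -/
lemma dmon_strict {t : ℕ} (ht : 0 < t)
    (hw : (∏ i, x i) ^ (t - 1) ∉ Ideal.span (Set.range fun i => x i ^ t)) {j : ℕ} (hj : j < t ^ d) :
    dmon x t j ∉ Lm (Ideal.span (Set.range fun i => x i ^ t)) (dmon x t) j := by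
  intro hmem
  apply hw
  have hlt : t ^ d - 1 - j < t ^ d := by omega
  set α := finFunctionFinEquiv.symm ⟨t ^ d - 1 - j, hlt⟩ with hα
  let γ : Fin d → ℕ := fun i => t - 1 - α i
  have h1 : (∏ i, x i) ^ (t - 1) = mon x γ * dmon x t j := by
    rw [dmon, dif_pos hlt, mon_mul, ← mon_const]
    congr 1
    ext i
    simp only [γ, Pi.add_apply]
    have := (α i).2
    rw [← hα]
    omega
  rw [h1]
  suffices h : Lm (Ideal.span (Set.range fun i => x i ^ t)) (dmon x t) j ≤
      Submodule.comap (LinearMap.mulLeft S (mon x γ)) (Ideal.span (Set.range fun i => x i ^ t)) by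
    simpa using h hmem
  refine sup_le (fun y hy => ?_) ?_
  · simp only [Submodule.mem_comap, LinearMap.mulLeft_apply]
    exact Ideal.mul_mem_left _ _ hy
  · rw [Ideal.span_le]
    rintro _ ⟨k, hk, rfl⟩
    simp only [Set.mem_Iio] at hk
    have hlt' : t ^ d - 1 - k < t ^ d := by omega
    simp only [SetLike.mem_coe, Submodule.mem_comap, LinearMap.mulLeft_apply]
    rw [dmon, dif_pos hlt', mon_mul]
    set β := finFunctionFinEquiv.symm ⟨t ^ d - 1 - k, hlt'⟩ with hβ
    have hnle : ¬ β ≤ α := by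
      intro h
      have := fff_mono h
      rw [hα, hβ, Equiv.apply_symm_apply, Equiv.apply_symm_apply, Fin.le_def] at this
      simp only at this
      omega
    rw [Pi.le_def] at hnle
    push Not at hnle
    obtain ⟨i, hi⟩ := hnle
    refine mon_mem_of_le x (i := i) ?_
    simp only [γ, Pi.add_apply]
    rw [Fin.lt_def] at hi
    have := (β i).2
    omega

end Monomials
end FA

/-! ### existence of systems of parameters; one direction -/
namespace FA
section Sop

lemma exists_sop {R : Type u} [CommRing R] [IsNoetherianRing R] [IsLocalRing R] {d : ℕ}
    (hd : ringKrullDim R = d) :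
    ∃ x : Fin d → R, (Ideal.span (Set.range x)).radical = IsLocalRing.maximalIdeal R := by
  obtain ⟨s, hs, hc⟩ := Ideal.exists_finset_card_eq_height_of_isNoetherianRing
    (IsLocalRing.maximalIdeal R)
  have h1 : s.card = d := by
    have h2 := IsLocalRing.maximalIdeal_height_eq_ringKrullDim (R := R)
    rw [hd, ← hc] at h2
    exact_mod_cast h2
  subst h1
  refine ⟨fun i => s.equivFin.symm i, ?_⟩
  have hr : Set.range (fun i => ((s.equivFin.symm i : s) : R)) = s := by
    ext y
    constructor
    · rintro ⟨i, rfl⟩; exact (s.equivFin.symm i).2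
    · intro hy; exact ⟨s.equivFin ⟨y, hy⟩, by simp⟩
  rw [hr, ← Ideal.sInf_minimalPrimes]
  have : (Ideal.span (s : Set R)).minimalPrimes = {IsLocalRing.maximalIdeal R} := by
    ext q
    simp only [Set.mem_singleton_iff]
    constructor
    · intro hq
      have hqm := IsLocalRing.le_maximalIdeal hq.1.1.ne_top
      exact le_antisymm hqm (hs.2 ⟨hq.1.1, hq.1.2⟩ hqm)
    · rintro rfl; exact hs
  rw [this, sInf_singleton]

lemma not_isQSequence {S : Type u} [CommRing S] {d : ℕ} (x : Fin d → S) {t : ℕ} (ht : 0 < t)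
    (hw : (∏ i, x i) ^ (t - 1) ∈ Ideal.span (Set.range fun i => x i ^ t)) : ¬ IsQSequence x := by
  rintro ⟨-, h⟩
  have h1 := h t ht
  have hpos : 0 < t ^ d := Nat.pow_pos ht
  have hch := dmon_chain x ht
  have hL : ∀ j, Lm (Ideal.span (Set.range fun i => x i ^ t)) (fun j => dmon x t (j + 1)) j
      = Lm (Ideal.span (Set.range fun i => x i ^ t)) (dmon x t) (j + 1) := by
    intro j
    induction j with
    | zero =>
      rw [Lm_zero, Lm_succ, Lm_zero, dmon_zero x ht, eq_comm, sup_eq_left, Ideal.span_le]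
      simpa using hw
    | succ j ih => rw [Lm_succ, ih, Lm_succ _ _ (j + 1)]
  have hch' : IsCh (Ideal.span (Set.range x)) (Ideal.span (Set.range fun i => x i ^ t))
      (fun j => dmon x t (j + 1)) (t ^ d - 1) := by
    constructor
    · intro j hj a ha
      rw [hL]
      exact hch.1 (j + 1) (by omega) a ha
    · rw [hL, Nat.sub_add_cancel hpos]
      exact hch.2
  have h2 : quasilength S (Ideal.span (Set.range x)) (S ⧸ Ideal.span (Set.range fun i => x i ^ t))
      ≤ ((t ^ d - 1 : ℕ) : ℕ∞) := sInf_le ⟨_, rfl, hch'.filtration⟩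
  have h3 := h1.trans h2
  have h4 : t ^ d ≤ t ^ d - 1 := by exact_mod_cast h3
  omega

lemma backward {R : Type u} [CommRing R] [IsNoetherianRing R] [IsLocalRing R] {d : ℕ}
    (hd : ringKrullDim R = d) (S : Type u) [CommRing S] [Algebra R S]
    (H : Subsingleton ((localCohomology (IsLocalRing.maximalIdeal R) d).obj (ModuleCat.of R S))) :
    ∃ x : Fin d → R, (Ideal.span (Set.range x)).radical = IsLocalRing.maximalIdeal R ∧
      ¬ IsQSequence (fun i => algebraMap R S (x i)) := by
  obtain ⟨x, hx⟩ := exists_sop hd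
  refine ⟨x, hx, ?_⟩
  obtain ⟨l, c, hc⟩ := lc_zero x _ hx (ModuleCat.of R S) H (1 : S)
  refine not_isQSequence _ (t := l + 1) (by omega) ?_
  have e : (∏ i, algebraMap R S (x i)) ^ (l + 1 - 1) = ∑ i, algebraMap R S (x i) ^ (l + 1) * c i := by
    have e1 : (∏ i, x i) ^ l • (1 : S) = ∑ i, x i ^ (1 + l) • (show S from c i) := hc
    rw [Algebra.smul_def, mul_one, map_pow, map_prod] at e1
    rw [Nat.add_sub_cancel, e1]
    refine Finset.sum_congr rfl fun i _ => ?_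
    rw [Algebra.smul_def, map_pow, add_comm]
  rw [e]
  exact sum_mem fun i _ => Ideal.mul_mem_right _ _ (Ideal.subset_span ⟨i, rfl⟩)

end Sop
end FA

/-! ### Part D: lengths -/
namespace FA
section Len
variable {R : Type u} [CommRing R]

/-- the length of `R/I` -/
noncomputable def len (I : Ideal R) : ℕ∞ := Module.length R (R ⧸ I)

lemma len_anti {I J : Ideal R} (h : I ≤ J) : len J ≤ len I := by
  rw [len, len, Module.length_quotient, Module.length_quotient]
  exact Order.coheight_anti h

lemma len_top : len (⊤ : Ideal R) = 0 := by
  rw [len, Module.length_quotient, Order.coheight_top]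

lemma len_step {L b : Ideal R} {m : R} (h : ∀ a ∈ b, a * m ∈ L) :
    len L ≤ len b + len (L ⊔ Ideal.span {m}) := by
  let f : (R ⧸ b) →ₗ[R] (R ⧸ L) := Submodule.mapQ b L (LinearMap.mulRight R m) (by
    intro a ha; simpa using h a ha)
  let g : (R ⧸ L) →ₗ[R] (R ⧸ (L ⊔ Ideal.span {m})) := Submodule.mapQ L _ LinearMap.id (by
    intro a ha; exact Ideal.mem_sup_left ha)
  have hg : Function.Surjective g := by
    intro y
    obtain ⟨y, rfl⟩ := Submodule.mkQ_surjective _ y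
    exact ⟨Submodule.mkQ _ y, rfl⟩
  have h1 := Module.length_eq_add_of_exact (LinearMap.ker g).subtype g
    (Submodule.subtype_injective _) hg (LinearMap.exact_subtype_ker_map g)
  rw [len, h1]
  gcongr
  · have hle : LinearMap.ker g ≤ LinearMap.range f := by
      intro y hy
      obtain ⟨y, rfl⟩ := Submodule.mkQ_surjective _ y
      have hy' : y ∈ L ⊔ Ideal.span {m} := by
        have : Submodule.mkQ (L ⊔ Ideal.span {m}) y = 0 := hy
        simpa [Ideal.Quotient.eq_zero_iff_mem] using this
      obtain ⟨a, ha, c, hc, rfl⟩ := Submodule.mem_sup.mp hy'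
      obtain ⟨r, rfl⟩ := Ideal.mem_span_singleton'.mp hc
      refine ⟨Submodule.mkQ _ r, ?_⟩
      have : Submodule.mkQ L (r * m) = Submodule.mkQ L (a + r * m) := by
        rw [map_add]
        have : Submodule.mkQ L a = 0 := by simpa [Ideal.Quotient.eq_zero_iff_mem] using ha
        rw [this, zero_add]
      rw [← this]
      rfl
    calc Module.length R (LinearMap.ker g) ≤ Module.length R (LinearMap.range f) :=
          Module.length_le_of_injective (Submodule.inclusion hle) (Submodule.inclusion_injective hle)
      _ ≤ Module.length R (R ⧸ b) :=
          Module.length_le_of_surjective f.rangeRestrict f.surjective_rangeRestrict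
  · exact le_rfl

/-- general chain estimate -/
lemma len_chain_le {K b : Ideal R} {m : ℕ → R} {h : ℕ}
    (H : ∀ j < h, ∀ a ∈ b, a * m j ∈ Lm K m j) : len K ≤ h * len b + len (Lm K m h) := by
  suffices ∀ j ≤ h, len K ≤ j * len b + len (Lm K m j) from this h le_rfl
  intro j
  induction j with
  | zero => simp [Lm_zero]
  | succ j ih =>
    intro hj
    refine (ih (by omega)).trans ?_
    have := len_step (H j (by omega))
    rw [← Lm_succ] at this
    calc _ ≤ (j : ℕ∞) * len b + (len b + len (Lm K m (j + 1))) := by gcongr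
      _ = _ := by push_cast; ring

lemma len_ge_of_strict {K : Ideal R} {m : ℕ → R} {h : ℕ}
    (H : ∀ j < h, m j ∉ Lm K m j) : (h : ℕ∞) ≤ len K := by
  suffices ∀ j ≤ h, (j : ℕ∞) + len (Lm K m j) ≤ len K from le_self_add.trans (this h le_rfl)
  intro j
  induction j with
  | zero => simp [Lm_zero]
  | succ j ih =>
    intro hj
    refine le_trans ?_ (ih (by omega))
    have hlt : Lm K m j < Lm K m (j + 1) := by
      refine lt_of_le_of_ne (Lm_mono K m (by omega)) fun e => H j (by omega) ?_
      rw [e, Lm_succ]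
      exact Ideal.mem_sup_right (Ideal.mem_span_singleton_self _)
    have := Order.coheight_add_one_le hlt
    rw [← Module.length_quotient, ← Module.length_quotient] at this
    calc ((j + 1 : ℕ) : ℕ∞) + len (Lm K m (j + 1)) = j + (len (Lm K m (j + 1)) + 1) := by
          push_cast; ring
      _ ≤ _ := by gcongr; exact this

/-- the ideal generated by powers -/
def pw {d : ℕ} (x : Fin d → R) (k : ℕ) : Ideal R := Ideal.span (Set.range fun i => x i ^ k)

lemma len_pw_mul {d : ℕ} (x : Fin d → R) (k s : ℕ) (hs : 0 < s) :
    len (pw x (k * s)) ≤ (s ^ d : ℕ) * len (pw x k) := by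
  have h := dmon_chain (fun i => x i ^ k) hs
  have := len_chain_le h.1
  rw [h.2, len_top, add_zero] at this
  simpa only [pw, pow_mul] using this

lemma le_len_pw {d : ℕ} (x : Fin d → R) {t : ℕ} (ht : 0 < t)
    (hw : (∏ i, x i) ^ (t - 1) ∉ pw x t) : ((t ^ d : ℕ) : ℕ∞) ≤ len (pw x t) :=
  len_ge_of_strict fun _ hj => dmon_strict x ht hw hj

lemma pw_anti {d : ℕ} (x : Fin d → R) {k l : ℕ} (h : k ≤ l) : pw x l ≤ pw x k := by
  rw [pw, Ideal.span_le]
  rintro _ ⟨i, rfl⟩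
  exact Ideal.mem_of_dvd _ (pow_dvd_pow _ h) (Ideal.subset_span ⟨i, rfl⟩)

/-- main inequality -/
lemma len_main {d : ℕ} (x : Fin d → R) (q T : ℕ) (C : R) (M : ℕ → R) (h : ℕ)
    (H : ∀ j < h, ∀ i, C * x i ^ q * M j ∈ Lm (pw x T) M j) (hC : C ∈ Lm (pw x T) M h) :
    len (pw x T) ≤ h * (d * len (pw x T ⊔ Ideal.span {C}) + len (pw x q)) +
      len (pw x T ⊔ Ideal.span {C}) := by
  let b : Ideal R := pw x T ⊔ Ideal.span (Set.range fun i => C * x i ^ q)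
  have h1 : len (pw x T) ≤ h * len b + len (Lm (pw x T) M h) := by
    refine len_chain_le fun j hj => ?_
    suffices hb : b ≤ Submodule.comap (LinearMap.mulRight R (M j)) (Lm (pw x T) M j) by
      intro a ha
      simpa using hb ha
    refine sup_le (fun y hy => ?_) ?_
    · exact Ideal.mul_mem_right _ _ (le_Lm _ _ _ hy)
    · rw [Ideal.span_le]
      rintro _ ⟨i, rfl⟩
      exact H j hj i
  have h2 : len (Lm (pw x T) M h) ≤ len (pw x T ⊔ Ideal.span {C}) :=
    len_anti (sup_le (le_Lm _ _ _) ((Ideal.span_singleton_le_iff_mem _).mpr hC))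
  let m : ℕ → R := fun j => if hj : j < d then x ⟨j, hj⟩ ^ q else 0
  have h3 : len b ≤ d * len (pw x T ⊔ Ideal.span {C}) + len (Lm b m d) := by
    refine len_chain_le fun j hj => ?_
    suffices hb : pw x T ⊔ Ideal.span {C} ≤ Submodule.comap (LinearMap.mulRight R (m j)) b by
      intro a ha
      exact le_Lm _ _ _ (by simpa using hb ha)
    refine sup_le (fun y hy => ?_) ?_
    · exact Ideal.mul_mem_right _ _ (Ideal.mem_sup_left hy)
    · rw [Ideal.span_le]
      rintro _ rfl
      refine Ideal.mem_sup_right (Ideal.subset_span ⟨⟨j, hj⟩, ?_⟩)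
      simp [m, hj]
  have h4 : len (Lm b m d) ≤ len (pw x q) := by
    refine len_anti ?_
    rw [pw, Ideal.span_le]
    rintro _ ⟨i, rfl⟩
    refine Ideal.mem_sup_right (Ideal.subset_span ⟨i, i.2, ?_⟩)
    simp [m]
  calc _ ≤ _ := h1
    _ ≤ _ := by gcongr; exact h3.trans (by gcongr)

lemma len_pw_ne_top [IsNoetherianRing R] [IsLocalRing R] {I : Ideal R}
    (hI : I.radical = IsLocalRing.maximalIdeal R) : len I ≠ ⊤ := by
  have : IsArtinianRing (R ⧸ I) :=
    IsLocalRing.quotient_artinian_of_mem_minimalPrimes_of_isLocalRing I (by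
      rw [← Ideal.radical_minimalPrimes, hI, Ideal.minimalPrimes_eq_subsingleton_self]
      rfl)
  rw [len, Module.length_eq_of_surjective (R := R ⧸ I) (S := R) Ideal.Quotient.mk_surjective]
  exact Module.length_ne_top

lemma pw_radical {d : ℕ} (x : Fin d → R) {k : ℕ} (hk : 0 < k) :
    (pw x k).radical = (Ideal.span (Set.range x)).radical := by
  apply le_antisymm
  · refine Ideal.radical_mono ?_
    have := pw_anti x (k := 1) (l := k) hk
    simpa [pw] using this
  · rw [Ideal.radical_le_radical_iff, Ideal.span_le]
    rintro _ ⟨i, rfl⟩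
    exact ⟨k, Ideal.subset_span ⟨i, rfl⟩⟩

end Len
end FA

/-! ### Part G: growth of lengths in lower dimension -/
namespace FA
section Growth
variable {R : Type u} [CommRing R]

lemma Lm_mono_left {K K' : Ideal R} (h : K ≤ K') (m : ℕ → R) (j : ℕ) : Lm K m j ≤ Lm K' m j :=
  sup_le_sup_right h _

lemma len_pw_sup {e : ℕ} (y : Fin e → R) (C : R) {N : ℕ} (hN : 0 < N) :
    len (pw y N ⊔ Ideal.span {C}) ≤ (N ^ e : ℕ) * len (Ideal.span (Set.range y) ⊔ Ideal.span {C}) := by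
  have h := dmon_chain y hN
  have hle : pw y N ≤ pw y N ⊔ Ideal.span {C} := le_sup_left
  have := len_chain_le (K := pw y N ⊔ Ideal.span {C})
    (b := Ideal.span (Set.range y) ⊔ Ideal.span {C}) (m := dmon y N) (h := N ^ e) (by
      intro j hj
      suffices hb : Ideal.span (Set.range y) ⊔ Ideal.span {C} ≤ Submodule.comap
          (LinearMap.mulRight R (dmon y N j)) (Lm (pw y N ⊔ Ideal.span {C}) (dmon y N) j) by
        intro a ha
        simpa using hb ha
      refine sup_le (fun a ha => ?_) ?_
      · exact Lm_mono_left hle _ _ (h.1 j hj a ha)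
      · rw [Ideal.span_le]
        rintro _ rfl
        exact le_Lm _ _ _ (Ideal.mul_mem_right _ _ (Ideal.mem_sup_right
          (Ideal.mem_span_singleton_self _))))
  have ht : Lm (pw y N ⊔ Ideal.span {C}) (dmon y N) (N ^ e) = ⊤ :=
    top_le_iff.mp (h.2.symm.le.trans (Lm_mono_left hle _ _))
  rwa [ht, len_top, add_zero] at this

lemma pow_mem_pw {d : ℕ} (x : Fin d → R) {y : R} (hy : y ∈ Ideal.span (Set.range x)) {k : ℕ}
    (hk : 0 < k) (hd : 0 < d) : y ^ (d * k) ∈ pw x k := by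
  obtain ⟨c, rfl⟩ := (Ideal.mem_span_range_iff_exists_fun).mp hy
  have h := Ideal.sum_pow_mem_span_pow Finset.univ (fun i => c i * x i) (k - 1)
  rw [Finset.card_univ, Fintype.card_fin, Nat.sub_add_cancel hk] at h
  have hle : d * (k - 1) + 1 ≤ d * k := by
    obtain ⟨k, rfl⟩ := Nat.exists_eq_add_of_le' hk
    simp only [Nat.add_sub_cancel]
    nlinarith
  refine Ideal.mem_of_dvd _ (pow_dvd_pow _ hle) ?_
  refine Ideal.span_le.mpr ?_ h
  rintro _ ⟨i, -, rfl⟩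
  simp only [mul_pow]
  exact Ideal.mul_mem_left _ _ (Ideal.subset_span ⟨i, rfl⟩)

lemma growth [IsNoetherianRing R] [IsLocalRing R] [IsDomain R] {d : ℕ} (hd : ringKrullDim R = d)
    (x : Fin d → R) (hx : (Ideal.span (Set.range x)).radical = IsLocalRing.maximalIdeal R)
    {C : R} (hC : C ≠ 0) :
    ∃ B : ℕ, ∀ k, 0 < k → len (pw x k ⊔ Ideal.span {C}) * k ≤ (B * k ^ d : ℕ) := by
  by_cases hu : IsUnit C
  · refine ⟨0, fun k _ => ?_⟩
    rw [Ideal.span_singleton_eq_top.mpr hu, sup_top_eq, len_top]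
    simp
  have hCm : C ∈ IsLocalRing.maximalIdeal R := hu
  have hne : Ideal.span {C} ≠ ⊤ := fun h => hu (Ideal.span_singleton_eq_top.mp h)
  have : Nontrivial (R ⧸ Ideal.span {C}) := Ideal.Quotient.nontrivial_iff.mpr hne
  have : IsLocalRing (R ⧸ Ideal.span {C}) :=
    IsLocalRing.of_surjective' (Ideal.Quotient.mk _) Ideal.Quotient.mk_surjective
  have hdim := ringKrullDim_quotient_succ_le_of_nonZeroDivisor (mem_nonZeroDivisors_of_ne_zero hC)
  have hh := IsLocalRing.maximalIdeal_height_eq_ringKrullDim (R := R ⧸ Ideal.span {C})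
  have hft := Ideal.height_ne_top (I := IsLocalRing.maximalIdeal (R ⧸ Ideal.span {C}))
    Ideal.IsPrime.ne_top'
  obtain ⟨e, he⟩ := ENat.ne_top_iff_exists.mp hft
  rw [← he] at hh
  have hed : e + 1 ≤ d := by
    rw [← hh, hd] at hdim
    exact_mod_cast hdim
  obtain ⟨y', hy'⟩ := exists_sop hh.symm
  choose y hy using fun i => Ideal.Quotient.mk_surjective (y' i)
  have hJ : Ideal.span (Set.range y) ⊔ Ideal.span {C} =
      (Ideal.span (Set.range y')).comap (Ideal.Quotient.mk (Ideal.span {C})) := by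
    have : Ideal.span (Set.range y') = (Ideal.span (Set.range y)).map
        (Ideal.Quotient.mk (Ideal.span {C})) := by
      rw [Ideal.map_span, ← Set.range_comp]
      congr 2
      ext i; exact (hy i).symm
    rw [this, Ideal.comap_map_of_surjective _ Ideal.Quotient.mk_surjective, ← RingHom.ker_eq_comap_bot,
      Ideal.mk_ker]
  have hJr : (Ideal.span (Set.range y) ⊔ Ideal.span {C}).radical = IsLocalRing.maximalIdeal R := by
    rw [hJ, ← Ideal.comap_radical, hy']
    exact IsLocalRing.eq_maximalIdeal (Ideal.comap_isMaximal_of_surjective _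
      Ideal.Quotient.mk_surjective)
  obtain ⟨A, hA⟩ := ENat.ne_top_iff_exists.mp (len_pw_ne_top hJr)
  -- uniform exponent
  have hym : ∀ i, y i ∈ (Ideal.span (Set.range x)).radical := by
    intro i
    rw [hx, ← hJr]
    exact Ideal.le_radical (Ideal.mem_sup_left (Ideal.subset_span ⟨i, rfl⟩))
  choose r hr using hym
  let r' := 1 + ∑ i, r i
  have hr' : ∀ i, y i ^ r' ∈ Ideal.span (Set.range x) := fun i =>
    Ideal.mem_of_dvd _ (pow_dvd_pow _ ((Finset.single_le_sum (f := r) (fun _ _ => Nat.zero_le _)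
      (Finset.mem_univ i)).trans (Nat.le_add_left _ _))) (hr i)
  have hdpos : 0 < d := by omega
  refine ⟨(r' * d) ^ e * A, fun k hk => ?_⟩
  have hN : 0 < r' * (d * k) := by positivity
  have h1 : pw y (r' * (d * k)) ≤ pw x k := by
    rw [pw, Ideal.span_le]
    rintro _ ⟨i, rfl⟩
    simp only [pow_mul (y i) r', SetLike.mem_coe]
    exact pow_mem_pw x (hr' i) hk hdpos
  have h2 : len (pw x k ⊔ Ideal.span {C}) ≤ ((r' * (d * k)) ^ e : ℕ) * A := by
    rw [hA]
    exact (len_anti (sup_le_sup_right h1 _)).trans (len_pw_sup y C hN)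
  calc len (pw x k ⊔ Ideal.span {C}) * k ≤ (((r' * (d * k)) ^ e : ℕ) * A) * k := by gcongr
    _ = (((r' * d) ^ e * A * k ^ (e + 1) : ℕ) : ℕ∞) := by
      rw [← Nat.cast_mul, ← Nat.cast_mul]
      congr 1
      rw [show r' * (d * k) = (r' * d) * k by rw [mul_assoc], mul_pow, pow_succ]
      simp only [mul_assoc, mul_comm, mul_left_comm]
    _ ≤ _ := by
      have : k ^ (e + 1) ≤ k ^ d := Nat.pow_le_pow_right hk hed
      exact_mod_cast Nat.mul_le_mul_left _ this

end Growth
end FA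

/-! ### Part F: the limit argument -/
namespace FA
section Limit
open Filter Topology

lemma limit_arg (a : ℕ → ℕ) (d p t h B : ℕ) (hp : 1 < p) (ht : 0 < t)
    (h1 : ∀ k s, 0 < k → 0 < s → a (k * s) ≤ s ^ d * a k)
    (hmono : ∀ k l, 0 < k → k ≤ l → a k ≤ a l)
    (h2 : ∀ k, 0 < k → k ^ d ≤ a k)
    (h3 : ∀ e, a (t * p ^ e) * (t * p ^ e) ≤
      h * (d * (B * (t * p ^ e) ^ d) + a (p ^ e) * (t * p ^ e)) + B * (t * p ^ e) ^ d) :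
    t ^ d ≤ h := by
  let b : ℕ → ℝ := fun k => (a k : ℝ) / (k : ℝ) ^ d
  have hb1 : ∀ k, 0 < k → 1 ≤ b k := by
    intro k hk
    have : (0 : ℝ) < (k : ℝ) ^ d := by positivity
    rw [one_le_div this]
    exact_mod_cast h2 k hk
  have hppos : ∀ e, 0 < p ^ e := fun e => Nat.pow_pos (by omega)
  have hanti : Antitone fun e => b (p ^ e) := by
    refine antitone_nat_of_succ_le fun e => ?_
    have := h1 (p ^ e) p (hppos e) (by omega)
    have hq : (0 : ℝ) < ((p ^ e : ℕ) : ℝ) ^ d := by have := hppos e; positivity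
    have hq' : (0 : ℝ) < (p : ℝ) ^ d := by positivity
    have this' : (a (p ^ e * p) : ℝ) ≤ (p : ℝ) ^ d * a (p ^ e) := by exact_mod_cast this
    simp only [b, pow_succ p e]
    rw [Nat.cast_mul, mul_pow, div_le_div_iff₀ (by positivity) hq]
    calc _ ≤ ((p : ℝ) ^ d * a (p ^ e)) * ((p ^ e : ℕ) : ℝ) ^ d := by gcongr
      _ = _ := by ring
  have hbdd : BddBelow (Set.range fun e => b (p ^ e)) := ⟨1, by rintro _ ⟨e, rfl⟩; exact hb1 _ (hppos e)⟩
  have hlim := tendsto_atTop_ciInf hanti hbdd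
  set β := ⨅ e, b (p ^ e) with hβ
  have hβ1 : 1 ≤ β := le_ciInf fun e => hb1 _ (hppos e)
  have hpe : Tendsto (fun e => ((p ^ e : ℕ) : ℝ)) atTop atTop :=
    tendsto_natCast_atTop_atTop.comp (tendsto_pow_atTop_atTop_of_one_lt hp)
  have hβk : ∀ k, 0 < k → β ≤ b k := by
    intro k hk
    have hk' : (0 : ℝ) < k := by exact_mod_cast hk
    have hbound : ∀ e, b (p ^ e) ≤ (1 + k / ((p ^ e : ℕ) : ℝ)) ^ d * b k := by
      intro e
      set q := p ^ e with hq
      have hq0 : 0 < q := hppos e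
      have hq0' : (0 : ℝ) < q := by exact_mod_cast hq0
      have hle : q ≤ k * (q / k + 1) := by
        have := Nat.div_add_mod q k
        have := Nat.mod_lt q hk
        nlinarith
      have h5 : a q ≤ (q / k + 1) ^ d * a k := (hmono _ _ hq0 hle).trans (h1 _ _ hk (Nat.succ_pos _))
      have h6 : ((q / k : ℕ) : ℝ) ≤ (q : ℝ) / k := Nat.cast_div_le
      have h7 : (a q : ℝ) ≤ ((q : ℝ) / k + 1) ^ d * a k := by
        calc (a q : ℝ) ≤ (((q / k : ℕ) : ℝ) + 1) ^ d * a k := by exact_mod_cast h5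
          _ ≤ _ := by gcongr
      simp only [b]
      rw [div_le_iff₀ (by positivity)]
      refine h7.trans_eq ?_
      have e1 : (q : ℝ) / k + 1 = (1 + k / q) * q / k := by field_simp
      rw [e1, div_pow, mul_pow]
      ring
    have hl2 : Tendsto (fun e => (1 + (k : ℝ) / ((p ^ e : ℕ) : ℝ)) ^ d * b k) atTop
        (𝓝 ((1 + 0) ^ d * b k)) := by
      refine Tendsto.mul_const _ (Tendsto.pow (Tendsto.const_add _ ?_) d)
      exact Tendsto.div_atTop tendsto_const_nhds hpe
    have := le_of_tendsto_of_tendsto' hlim hl2 hbound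
    simpa using this
  have hfin : ∀ e, β ≤ h * (d * B / (t * ((p ^ e : ℕ) : ℝ)) + b (p ^ e) / (t : ℝ) ^ d) +
      B / (t * ((p ^ e : ℕ) : ℝ)) := by
    intro e
    refine (hβk (t * p ^ e) (Nat.mul_pos ht (hppos e))).trans ?_
    have h4 := h3 e
    have hq0 := hppos e
    generalize p ^ e = q at *
    have hq0' : (0 : ℝ) < q := by exact_mod_cast hq0
    have ht0' : (0 : ℝ) < t := by exact_mod_cast ht
    have h5 : (a (t * q) : ℝ) * (t * q) ≤
      h * (d * (B * (t * q : ℝ) ^ d) + a q * (t * q)) + B * (t * q : ℝ) ^ d := by exact_mod_cast h4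
    simp only [b]
    rw [Nat.cast_mul]
    rw [div_le_iff₀ (by positivity)]
    rw [← le_div_iff₀ (by positivity)] at h5
    refine h5.trans_eq ?_
    field_simp
    ring
  have hl3 : Tendsto (fun e => (h : ℝ) * (d * B / (t * ((p ^ e : ℕ) : ℝ)) + b (p ^ e) / (t : ℝ) ^ d) +
      B / (t * ((p ^ e : ℕ) : ℝ))) atTop (𝓝 (h * (0 + β / (t : ℝ) ^ d) + 0)) := by
    have ht0' : (0 : ℝ) < t := by exact_mod_cast ht
    have hpt : Tendsto (fun e => (t : ℝ) * ((p ^ e : ℕ) : ℝ)) atTop atTop :=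
      Tendsto.const_mul_atTop ht0' hpe
    exact (((Tendsto.div_atTop tendsto_const_nhds hpt).add (hlim.div_const _)).const_mul _).add
      (Tendsto.div_atTop tendsto_const_nhds hpt)
  have hc := ge_of_tendsto' hl3 hfin
  have htd : (0 : ℝ) < (t : ℝ) ^ d := by positivity
  rw [zero_add, add_zero, ← mul_div_assoc, le_div_iff₀ htd, mul_comm] at hc
  have : (t : ℝ) ^ d ≤ h := le_of_mul_le_mul_right hc (by linarith)
  exact_mod_cast this

end Limit
end FA

/-! ### transporting chains along twisted maps `S → Frac R` -/
namespace FA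
section Transport
variable {R : Type u} [CommRing R] [IsDomain R] {S : Type u} [CommRing S] [Algebra R S]

lemma transport (p : ℕ) (θ : ℕ → S →+* FractionRing R)
    (hθ : ∀ e r, θ e (algebraMap R S r) = algebraMap R (FractionRing R) (r ^ p ^ e))
    (c : R)
    (hB : ∀ s, ∃ N, ∀ e, ∃ r, algebraMap R (FractionRing R) r =
      algebraMap R (FractionRing R) c ^ N * θ e s)
    {d : ℕ} (x : Fin d → R) (t : ℕ) (m : ℕ → S) (h : ℕ)
    (H : IsCh (Ideal.span (Set.range fun i => algebraMap R S (x i)))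
      (Ideal.span (Set.range fun i => algebraMap R S (x i) ^ t)) m h) :
    ∃ N, ∀ e, ∃ M : ℕ → R,
      (∀ j < h, ∀ i, c ^ N * x i ^ p ^ e * M j ∈ Lm (pw x (t * p ^ e)) M j) ∧
      c ^ N ∈ Lm (pw x (t * p ^ e)) M h := by
  set A := algebraMap R (FractionRing R) with hA
  have hinj : Function.Injective A := IsFractionRing.injective R (FractionRing R)
  choose N' hN' using hB
  let N0 := ∑ j ∈ Finset.range h, N' (m j)
  have hM : ∀ e j, ∃ r, j < h → A r = A c ^ N0 * θ e (m j) := by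
    intro e j
    by_cases hj : j < h
    · obtain ⟨r, hr⟩ := hN' (m j) e
      have hle : N' (m j) ≤ N0 := Finset.single_le_sum (f := fun j => N' (m j))
        (fun _ _ => Nat.zero_le _) (Finset.mem_range.mpr hj)
      refine ⟨c ^ (N0 - N' (m j)) * r, fun _ => ?_⟩
      rw [map_mul, hr, map_pow, ← mul_assoc, ← pow_add, Nat.sub_add_cancel hle]
    · exact ⟨0, fun h => absurd h hj⟩
  choose M hM using hM
  have key : ∀ j ≤ h, ∀ z ∈ Lm (Ideal.span (Set.range fun i => algebraMap R S (x i) ^ t)) m j,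
      ∃ N, ∀ e, ∃ r ∈ Lm (pw x (t * p ^ e)) (M e) j, A r = A c ^ N * θ e z := by
    intro j hj z hz
    rw [Lm, ← Ideal.span_union] at hz
    refine Submodule.span_induction (p := fun z _ => ∃ N, ∀ e, ∃ r ∈ Lm (pw x (t * p ^ e)) (M e) j,
      A r = A c ^ N * θ e z) ?_ ?_ ?_ ?_ hz
    · rintro _ (⟨i, rfl⟩ | ⟨k, hk, rfl⟩)
      · refine ⟨0, fun e => ⟨x i ^ (t * p ^ e), le_Lm _ _ _ (Ideal.subset_span ⟨i, rfl⟩), ?_⟩⟩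
        simp only [map_pow, hθ, pow_zero, one_mul]
        rw [← pow_mul, mul_comm]
      · refine ⟨N0, fun e => ⟨M e k, Ideal.mem_sup_right (Ideal.subset_span ⟨k, hk, rfl⟩), ?_⟩⟩
        exact hM e k (lt_of_lt_of_le hk hj)
    · exact ⟨0, fun e => ⟨0, zero_mem _, by simp⟩⟩
    · rintro z₁ z₂ - - ⟨N₁, h₁⟩ ⟨N₂, h₂⟩
      refine ⟨N₁ + N₂, fun e => ?_⟩
      obtain ⟨r₁, hr₁, e₁⟩ := h₁ e
      obtain ⟨r₂, hr₂, e₂⟩ := h₂ e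
      refine ⟨c ^ N₂ * r₁ + c ^ N₁ * r₂, add_mem (Ideal.mul_mem_left _ _ hr₁)
        (Ideal.mul_mem_left _ _ hr₂), ?_⟩
      simp only [map_add, map_mul, map_pow, e₁, e₂]
      ring
    · rintro s z - ⟨N₁, h₁⟩
      refine ⟨N' s + N₁, fun e => ?_⟩
      obtain ⟨r₁, hr₁, e₁⟩ := h₁ e
      obtain ⟨r₂, e₂⟩ := hN' s e
      refine ⟨r₂ * r₁, Ideal.mul_mem_left _ _ hr₁, ?_⟩
      simp only [map_mul, e₁, e₂, smul_eq_mul]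
      ring
  have k1 : ∀ j i, ∃ N, j < h → ∀ e, ∃ r ∈ Lm (pw x (t * p ^ e)) (M e) j,
      A r = A c ^ N * θ e (algebraMap R S (x i) * m j) := by
    intro j i
    by_cases hj : j < h
    · obtain ⟨N, hN⟩ := key j hj.le _ (H.1 j hj _ (Ideal.subset_span ⟨i, rfl⟩))
      exact ⟨N, fun _ => hN⟩
    · exact ⟨0, fun h => absurd h hj⟩
  choose N1 hN1 using k1
  obtain ⟨N2, hN2⟩ := key h le_rfl 1 (H.2 ▸ Submodule.mem_top)
  let N := N2 + ∑ j ∈ Finset.range h, ∑ i, N1 j i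
  refine ⟨N, fun e => ⟨M e, fun j hj i => ?_, ?_⟩⟩
  · obtain ⟨r, hr, hre⟩ := hN1 j i hj e
    have hle : N1 j i ≤ N :=
      ((Finset.single_le_sum (f := fun i => N1 j i) (fun _ _ => Nat.zero_le _)
        (Finset.mem_univ i)).trans (Finset.single_le_sum (f := fun j => ∑ i, N1 j i)
        (fun _ _ => Nat.zero_le _) (Finset.mem_range.mpr hj))).trans (Nat.le_add_left _ _)
    have e1 : c ^ N * x i ^ p ^ e * M e j = c ^ N0 * c ^ (N - N1 j i) * r := by
      apply hinj
      simp only [map_mul, map_pow, hre, hM e j hj, hθ]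
      rw [← Nat.sub_add_cancel hle, pow_add, Nat.add_sub_cancel]
      ring
    rw [e1]
    exact Ideal.mul_mem_left _ _ hr
  · obtain ⟨r, hr, hre⟩ := hN2 e
    have e1 : c ^ N = c ^ (N - N2) * r := by
      apply hinj
      simp only [map_mul, map_pow, hre, map_one, mul_one]
      rw [← pow_add, Nat.sub_add_cancel (Nat.le_add_right _ _)]
    rw [e1]
    exact Ideal.mul_mem_left _ _ hr

/-- The forcing algebra. -/
abbrev Forc (n : ℕ) (g : Fin n → R) (u : R) : Type u :=
  MvPolynomial (Fin n) R ⧸ Ideal.span {MvPolynomial.C u -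
            ∑ l : Fin n, MvPolynomial.X l * MvPolynomial.C (g l)}

lemma exists_theta (p : ℕ) [Fact p.Prime] [CharP R p] (n : ℕ) (g : Fin n → R) (u : R) (c : R) (hc : c ≠ 0)
    (h : ∀ e, ∃ a : Fin n → R, c * u ^ p ^ e = ∑ l, a l * g l ^ p ^ e) :
    ∃ θ : ℕ → Forc n g u →+* FractionRing R,
      (∀ e r, θ e (algebraMap R _ r) = algebraMap R (FractionRing R) (r ^ p ^ e)) ∧
      (∀ s, ∃ N, ∀ e, ∃ r, algebraMap R (FractionRing R) r =
        algebraMap R (FractionRing R) c ^ N * θ e s) := by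
  choose a ha using h
  set A := algebraMap R (FractionRing R) with hA
  have hinj : Function.Injective A := IsFractionRing.injective R (FractionRing R)
  have hc' : A c ≠ 0 := fun h => hc (hinj (by rw [h, map_zero]))
  let ψ : ℕ → MvPolynomial (Fin n) R →+* FractionRing R := fun e =>
    MvPolynomial.eval₂Hom (A.comp (iterateFrobenius R p e)) (fun l => A (a e l) / A c)
  have hψC : ∀ e r, ψ e (MvPolynomial.C r) = A (r ^ p ^ e) := by
    intro e r
    simp [ψ, iterateFrobenius_def]
  have hψX : ∀ e l, A c * ψ e (MvPolynomial.X l) = A (a e l) := by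
    intro e l
    simp only [ψ, MvPolynomial.eval₂Hom_X']
    field_simp
  have hk : ∀ e, ∀ y ∈ Ideal.span {MvPolynomial.C u -
            ∑ l : Fin n, MvPolynomial.X l * MvPolynomial.C (g l)}, ψ e y = 0 := by
    intro e y hy
    obtain ⟨z, rfl⟩ := Ideal.mem_span_singleton'.mp hy
    rw [map_mul]
    have : ψ e (MvPolynomial.C u - ∑ l : Fin n, MvPolynomial.X l * MvPolynomial.C (g l)) = 0 := by
      apply mul_left_cancel₀ hc'
      rw [mul_zero, map_sub, map_sum, hψC, mul_sub, Finset.mul_sum, ← map_mul, ha e, map_sum, sub_eq_zero]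
      refine Finset.sum_congr rfl fun l _ => ?_
      rw [map_mul, map_mul, ← mul_assoc, hψX, hψC]
    rw [this, mul_zero]
  refine ⟨fun e => Ideal.Quotient.lift _ (ψ e) (hk e), fun e r => ?_, fun s => ?_⟩
  · exact hψC e r
  · obtain ⟨s, rfl⟩ := Ideal.Quotient.mk_surjective s
    simp only [Ideal.Quotient.lift_mk]
    induction s using MvPolynomial.induction_on with
    | C r => exact ⟨0, fun e => ⟨r ^ p ^ e, by rw [hψC]; simp⟩⟩
    | add s₁ s₂ h₁ h₂ =>
      obtain ⟨N₁, h₁⟩ := h₁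
      obtain ⟨N₂, h₂⟩ := h₂
      refine ⟨N₁ + N₂, fun e => ?_⟩
      obtain ⟨r₁, e₁⟩ := h₁ e
      obtain ⟨r₂, e₂⟩ := h₂ e
      refine ⟨c ^ N₂ * r₁ + c ^ N₁ * r₂, ?_⟩
      simp only [map_add, map_mul, map_pow, e₁, e₂]
      ring
    | mul_X s l h₁ =>
      obtain ⟨N₁, h₁⟩ := h₁
      refine ⟨N₁ + 1, fun e => ?_⟩
      obtain ⟨r₁, e₁⟩ := h₁ e
      refine ⟨r₁ * a e l, ?_⟩
      simp only [map_mul, e₁, ← hψX]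
      ring

end Transport
end FA

namespace FA
section Forward

lemma qseq_of_c {R : Type u} [CommRing R] [IsNoetherianRing R] [IsLocalRing R] [IsDomain R]
    (p : ℕ) [hp : Fact p.Prime] [CharP R p] (d : ℕ) (hd : ringKrullDim R = d)
    (n : ℕ) (g : Fin n → R) (u : R) (x : Fin d → R)
    (hx : (Ideal.span (Set.range x)).radical = IsLocalRing.maximalIdeal R)
    (hw : ∀ l : ℕ, (∏ i, algebraMap R (Forc n g u) (x i)) ^ l ∉
      Ideal.span (Set.range fun i => algebraMap R (Forc n g u) (x i) ^ (l + 1)))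
    (c : R) (hc : c ≠ 0) (h : ∀ e, ∃ a : Fin n → R, c * u ^ p ^ e = ∑ l, a l * g l ^ p ^ e) :
    IsQSequence (fun i => algebraMap R (Forc n g u) (x i)) := by
  refine ⟨?_, fun t ht => ?_⟩
  · intro h0
    apply hw 0
    simp [h0]
  have hwR : ∀ l : ℕ, (∏ i, x i) ^ l ∉ pw x (l + 1) := by
    intro l hl
    apply hw l
    have := Ideal.mem_map_of_mem (algebraMap R (Forc n g u)) hl
    rw [pw, Ideal.map_span, ← Set.range_comp, map_pow, map_prod] at this
    simpa only [Function.comp_def, map_pow] using this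
  rw [quasilength]
  refine le_sInf ?_
  rintro _ ⟨k, rfl, hk⟩
  obtain ⟨m, hm⟩ := exists_chain hk
  obtain ⟨θ, hθ, hB⟩ := exists_theta p n g u c hc h
  obtain ⟨N, hN⟩ := transport p θ hθ c hB x t m k hm
  obtain ⟨B, hB⟩ := growth hd x hx (pow_ne_zero N hc)
  have hfin : ∀ k, 0 < k → len (pw x k) ≠ ⊤ := fun k hk => len_pw_ne_top (by rw [pw_radical x hk, hx])
  have hcoe : ∀ k, 0 < k → (((len (pw x k)).toNat : ℕ) : ℕ∞) = len (pw x k) :=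
    fun k hk => ENat.coe_toNat (hfin k hk)
  have := limit_arg (fun k => (len (pw x k)).toNat) d p t k B hp.out.one_lt ht ?_ ?_ ?_ ?_
  · exact_mod_cast this
  · intro k s hk hs
    have := len_pw_mul x k s hs
    rw [← hcoe _ (Nat.mul_pos hk hs), ← hcoe _ hk] at this
    exact_mod_cast this
  · intro k l hk hl
    have := len_anti (pw_anti x hl)
    rw [← hcoe _ hk, ← hcoe _ (hk.trans_le hl)] at this
    exact_mod_cast this
  · intro k hk
    obtain ⟨l, rfl⟩ := Nat.exists_eq_add_of_le' hk
    have := le_len_pw x hk (by simpa using hwR l)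
    rw [← hcoe _ hk] at this
    exact_mod_cast this
  · intro e
    have hq : 0 < p ^ e := Nat.pow_pos hp.out.pos
    obtain ⟨M, hM1, hM2⟩ := hN e
    have hT : 0 < t * p ^ e := Nat.mul_pos ht hq
    have h1 := len_main x (p ^ e) (t * p ^ e) (c ^ N) M k hM1 hM2
    have h2 := hB _ hT
    have h3 : len (pw x (t * p ^ e) ⊔ Ideal.span {c ^ N}) ≠ ⊤ :=
      ne_top_of_le_ne_top (hfin _ hT) (len_anti le_sup_left)
    obtain ⟨D, hD⟩ := ENat.ne_top_iff_exists.mp h3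
    rw [← hD] at h1 h2
    rw [← hcoe _ hT, ← hcoe _ hq] at h1
    have h1' : (len (pw x (t * p ^ e))).toNat ≤ k * (d * D + (len (pw x (p ^ e))).toNat) + D := by
      exact_mod_cast h1
    have h2' : D * (t * p ^ e) ≤ B * (t * p ^ e) ^ d := by exact_mod_cast h2
    calc _ ≤ (k * (d * D + (len (pw x (p ^ e))).toNat) + D) * (t * p ^ e) := by gcongr
      _ = k * (d * (D * (t * p ^ e)) + (len (pw x (p ^ e))).toNat * (t * p ^ e)) +
          D * (t * p ^ e) := by ring
      _ ≤ _ := by gcongr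

/-- Frobenius trick -/
lemma frob_lc {R : Type u} [CommRing R] [IsNoetherianRing R] (J : Ideal R)
    (p : ℕ) [hp : Fact p.Prime] {d : ℕ} (x : Fin d → R)
    (hx : (Ideal.span (Set.range x)).radical = J)
    (S : Type u) [CommRing S] [Algebra R S] [CharP S p]
    (H : ¬ Subsingleton ((localCohomology J d).obj (ModuleCat.of R S))) (l : ℕ) :
    (∏ i, algebraMap R S (x i)) ^ l ∉
      Ideal.span (Set.range fun i => algebraMap R S (x i) ^ (l + 1)) := by
  intro hl
  obtain ⟨k, m, hkm⟩ := lc_ne_zero x J hx (ModuleCat.of R S) H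
  obtain ⟨c, hc⟩ := (Ideal.mem_span_range_iff_exists_fun).mp hl
  obtain ⟨e, he⟩ : ∃ e, k ≤ p ^ e := ⟨k, (Nat.lt_pow_self hp.out.one_lt).le⟩
  obtain ⟨r, hr⟩ := Nat.exists_eq_add_of_le he
  refine hkm (l * p ^ e) ⟨fun i => (algebraMap R S (x i) ^ r * c i ^ p ^ e * m : S), ?_⟩
  have h1 := congrArg (iterateFrobenius S p e) hc
  rw [map_sum] at h1
  simp only [iterateFrobenius_def, mul_pow, ← pow_mul] at h1
  show (∏ i, x i) ^ (l * p ^ e) • (m : S) = ∑ i, x i ^ (k + l * p ^ e) •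
    (algebraMap R S (x i) ^ r * c i ^ p ^ e * m : S)
  rw [Algebra.smul_def, map_pow, map_prod, ← h1, Finset.sum_mul]
  refine Finset.sum_congr rfl fun i _ => ?_
  rw [Algebra.smul_def, map_pow, show (l + 1) * p ^ e = (k + l * p ^ e) + r by rw [add_mul, hr]; ring,
    pow_add]
  ring

end Forward
end FA

/-! ### Part E1: coefficient fields -/
namespace FA
section CoeffField
open Polynomial

lemma lift_sq {K : Type u} [Field K] (p : ℕ) [hp : Fact p.Prime] [CharP K p] {B : Type u} [CommRing B]
    [CharP B p] (I : Ideal B) (hI : I ^ 2 = ⊥) (f : K →+* B ⧸ I) :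
    ∃ τ : K →+* B, (Ideal.Quotient.mk I).comp τ = f := by
  let E : Subring (K × B) := RingHom.eqLocus (f.comp (RingHom.fst K B))
    ((Ideal.Quotient.mk I).comp (RingHom.snd K B))
  have hE : ∀ z : K × B, z ∈ E ↔ f z.1 = Ideal.Quotient.mk I z.2 := fun z => Iff.rfl
  let G0 : Subring (K × B) := E.map (frobenius (K × B) p)
  let s : Set (Subring (K × B)) := {G | G0 ≤ G ∧ G ≤ E ∧ ∀ b, ((0, b) : K × B) ∈ G → b = 0}
  have hp2 : 2 ≤ p := hp.out.two_le
  have hIp : ∀ i ∈ I, i ^ p = 0 := by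
    intro i hi
    have h2 : i ^ 2 ∈ I ^ 2 := Ideal.pow_mem_pow hi 2
    rw [hI, Ideal.mem_bot] at h2
    exact pow_eq_zero_of_le hp2 h2
  have hG0 : G0 ∈ s := by
    refine ⟨le_rfl, ?_, ?_⟩
    · rintro _ ⟨z, hz, rfl⟩
      replace hz := (hE _).mp hz
      rw [hE]
      simp [frobenius_def, hz]
    · rintro b ⟨⟨k, b'⟩, hz, hzb⟩
      replace hz := (hE _).mp hz
      simp only [frobenius_def, Prod.ext_iff, Prod.pow_fst, Prod.pow_snd] at hzb hz
      have hk : k = 0 := pow_eq_zero_iff (hp.out.ne_zero) |>.mp hzb.1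
      rw [hk, map_zero, eq_comm, Ideal.Quotient.eq_zero_iff_mem] at hz
      rw [← hzb.2, hIp _ hz]
  obtain ⟨G, -, hGs, hGmax⟩ := zorn_le_nonempty₀ s (by
    intro c hc hchain y hy
    have hmem : ∀ z, z ∈ sSup c ↔ ∃ t ∈ c, z ∈ t := fun z =>
      Subring.mem_sSup_of_directedOn ⟨y, hy⟩ hchain.directedOn
    refine ⟨sSup c, ⟨?_, ?_, ?_⟩, fun z hz => le_sSup hz⟩
    · exact (hc hy).1.trans (le_sSup hy)
    · exact sSup_le fun t ht => (hc ht).2.1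
    · intro b hb
      obtain ⟨t, ht, hbt⟩ := (hmem _).mp hb
      exact (hc ht).2.2 b hbt) G0 hG0
  obtain ⟨hG0, hGE, hGb⟩ := hGs
  have hpow : ∀ k b, f k = Ideal.Quotient.mk I b → ((k ^ p, b ^ p) : K × B) ∈ G := fun k b h =>
    hG0 ⟨(k, b), h, rfl⟩
  have huniq : ∀ z w : K × B, z ∈ G → w ∈ G → z.1 = w.1 → z = w := by
    intro z w hz hw h
    have := hGb (z.2 - w.2) (by
      have := sub_mem hz hw
      rwa [show z - w = ((0, z.2 - w.2) : K × B) by ext <;> simp [h]] at this)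
    ext
    · exact h
    · exact sub_eq_zero.mp this
  have hfield : IsField G := by
    refine ⟨⟨0, 1, fun h => ?_⟩, mul_comm, ?_⟩
    · have := congrArg (fun z : G => (z : K × B).1) h
      simp at this
    · rintro ⟨z, hz⟩ hne
      have hz1 : z.1 ≠ 0 := fun h0 => hne (Subtype.ext (huniq z 0 hz (zero_mem _) h0))
      obtain ⟨b, hb⟩ := Ideal.Quotient.mk_surjective (f z.1⁻¹)
      have hb' := hpow _ _ hb.symm
      refine ⟨⟨z ^ (p - 1) * (z.1⁻¹ ^ p, b ^ p), mul_mem (pow_mem hz _) hb'⟩, Subtype.ext ?_⟩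
      refine huniq _ _ (mul_mem hz (mul_mem (pow_mem hz _) hb')) (one_mem _) ?_
      show z.1 * (z.1 ^ (p - 1) * z.1⁻¹ ^ p) = 1
      rw [← mul_assoc, ← pow_succ', Nat.sub_add_cancel (by omega), ← mul_pow, mul_inv_cancel₀ hz1, one_pow]
  have hsurj : ∀ a : K, ∃ b, ((a, b) : K × B) ∈ G := by
    intro a
    by_contra hcon
    push Not at hcon
    obtain ⟨b, hb⟩ := Ideal.Quotient.mk_surjective (f a)
    let g : G := ⟨(a ^ p, b ^ p), hpow a b hb.symm⟩
    letI : Field G := hfield.toField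
    have hirr : Irreducible (X ^ p - C g : G[X]) := by
      refine X_pow_sub_C_irreducible_of_prime hp.out fun z hz => ?_
      have h1 := congrArg (fun z : G => (z : K × B).1) hz
      have h2 : (z : K × B).1 ^ p = a ^ p := h1
      have h3 : (z : K × B).1 = a := frobenius_inj K p h2
      exact hcon (z : K × B).2 (by rw [← h3]; exact z.2)
    haveI : Fact (Irreducible (X ^ p - C g : G[X])) := ⟨hirr⟩
    let F : AdjoinRoot (X ^ p - C g : G[X]) →+* K × B := AdjoinRoot.lift G.subtype (a, b) (by
      simp only [eval₂_sub, eval₂_pow, eval₂_X, eval₂_C]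
      exact sub_self _)
    have hle : G ≤ F.range := fun z hz => ⟨AdjoinRoot.of _ ⟨z, hz⟩, by simp [F]⟩
    have hab : ((a, b) : K × B) ∈ F.range := ⟨AdjoinRoot.root _, by simp [F]⟩
    have hmem : F.range ∈ s := by
      refine ⟨hG0.trans hle, ?_, ?_⟩
      · rintro _ ⟨z, rfl⟩
        induction z using AdjoinRoot.induction_on with
        | ih P =>
          simp only [F, AdjoinRoot.lift_mk]
          rw [eval₂_eq_sum_range]
          refine sum_mem fun i _ => mul_mem (hGE (P.coeff i).2) (pow_mem ?_ _)
          exact hb.symm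
      · rintro b' ⟨z, hz⟩
        have h1 : ((RingHom.fst K B).comp F) z = 0 := by simp [hz]
        have h2 : z = 0 := (map_eq_zero _).mp h1
        rw [h2, map_zero] at hz
        exact (congrArg Prod.snd hz).symm
    exact hcon b (hGmax hmem hle hab)
  choose τ hτ using hsurj
  refine ⟨⟨⟨⟨τ, ?_⟩, ?_⟩, ?_, ?_⟩, ?_⟩
  · exact congrArg Prod.snd (huniq (1, τ 1) 1 (hτ 1) (one_mem _) rfl)
  · intro a b
    exact congrArg Prod.snd (huniq (a * b, τ (a * b)) ((a, τ a) * (b, τ b)) (hτ _)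
      (mul_mem (hτ a) (hτ b)) rfl)
  · exact congrArg Prod.snd (huniq (0, τ 0) 0 (hτ 0) (zero_mem _) rfl)
  · intro a b
    exact congrArg Prod.snd (huniq (a + b, τ (a + b)) ((a, τ a) + (b, τ b)) (hτ _)
      (add_mem (hτ a) (hτ b)) rfl)
  · ext a
    exact (hGE (hτ a)).symm

lemma formallySmooth_field (K : Type u) [Field K] (p : ℕ) [hp : Fact p.Prime] [Algebra (ZMod p) K] :
    Algebra.FormallySmooth (ZMod p) K := by
  refine Algebra.FormallySmooth.of_comp_surjective fun B _ _ I hI f => ?_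
  have : CharP K p := charP_of_injective_algebraMap (algebraMap (ZMod p) K).injective p
  cases subsingleton_or_nontrivial B with
  | inl h =>
    have : Subsingleton (B ⧸ I) := Ideal.Quotient.mk_surjective.subsingleton
    let τ : K →ₐ[ZMod p] B := { toFun := fun _ => 0, map_one' := Subsingleton.elim _ _, map_mul' := fun _ _ => Subsingleton.elim _ _, map_zero' := rfl, map_add' := fun _ _ => Subsingleton.elim _ _, commutes' := fun _ => Subsingleton.elim _ _ }
    exact ⟨τ, AlgHom.ext fun _ => Subsingleton.elim _ _⟩
  | inr h =>
    have : CharP B p := charP_of_injective_algebraMap (algebraMap (ZMod p) B).injective p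
    obtain ⟨τ, hτ⟩ := lift_sq p I hI f.toRingHom
    refine ⟨{ τ with commutes' := fun r => ?_ }, ?_⟩
    · exact RingHom.congr_fun (Subsingleton.elim (τ.comp (algebraMap (ZMod p) K)) (algebraMap (ZMod p) B)) r
    · ext a
      exact RingHom.congr_fun hτ a

lemma exists_coeffField (R : Type u) [CommRing R] [IsLocalRing R]
    [IsAdicComplete (IsLocalRing.maximalIdeal R) R] (p : ℕ) [hp : Fact p.Prime] [CharP R p] :
    ∃ σ : IsLocalRing.ResidueField R →+* R, ∀ k, IsLocalRing.residue R (σ k) = k := by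
  letI : Algebra (ZMod p) R := ZMod.algebra R p
  letI : Algebra (ZMod p) (IsLocalRing.ResidueField R) :=
    ((IsLocalRing.residue R).comp (algebraMap (ZMod p) R)).toAlgebra
  have := formallySmooth_field (IsLocalRing.ResidueField R) p
  let f : IsLocalRing.ResidueField R →ₐ[ZMod p] R ⧸ IsLocalRing.maximalIdeal R :=
    { RingHom.id (IsLocalRing.ResidueField R) with commutes' := fun r => rfl }
  obtain ⟨g, hg⟩ := Algebra.FormallySmooth.exists_mkₐ_comp_eq_of_isAdicComplete f
  exact ⟨g.toRingHom, fun k => AlgHom.congr_fun hg k⟩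

end CoeffField
end FA
namespace FA

theorem exists_evalHom {R : Type*} [CommRing R] [IsLocalRing R]
    [IsAdicComplete (IsLocalRing.maximalIdeal R) R] {K : Type*} [Field K] (σ : K →+* R)
    {d : ℕ} (x : Fin d → R) (hx : ∀ i, x i ∈ IsLocalRing.maximalIdeal R) :
    ∃ F : MvPowerSeries (Fin d) K →+* R,
      (∀ i, F (MvPowerSeries.X i) = x i) ∧ ∀ k, F (MvPowerSeries.C k) = σ k := by
  letI : WithIdeal R := ⟨IsLocalRing.maximalIdeal R⟩
  have hadic : IsAdic (IsLocalRing.maximalIdeal R) := rfl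
  obtain ⟨h1, h2⟩ := (IsAdic.isAdicComplete_iff hadic).mp ‹_›
  letI : UniformSpace K := ⊥
  haveI : DiscreteUniformity K := ⟨rfl⟩
  have hc : Continuous σ := continuous_of_discreteTopology
  have ha : MvPowerSeries.HasEval x := by
    refine ⟨fun s => WithIdeal.isTopologicallyNilpotent_of_mem (hx s), ?_⟩
    rw [Filter.cofinite_eq_bot]
    exact Filter.tendsto_bot
  refine ⟨MvPowerSeries.eval₂Hom hc ha, fun i => ?_, fun k => ?_⟩
  · rw [MvPowerSeries.coe_eval₂Hom, MvPowerSeries.eval₂_X]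
  · rw [MvPowerSeries.coe_eval₂Hom, MvPowerSeries.eval₂_C]

theorem fin_span {R : Type*} [CommRing R] [IsLocalRing R] [IsNoetherianRing R]
    (σ : IsLocalRing.ResidueField R →+* R) (hσ : ∀ k, IsLocalRing.residue R (σ k) = k) (n : ℕ) :
    letI := σ.toAlgebra
    ∃ T : Finset R, Submodule.span (IsLocalRing.ResidueField R) (T : Set R) ⊔
      ((IsLocalRing.maximalIdeal R)^n).restrictScalars (IsLocalRing.ResidueField R) = ⊤ := by
  classical
  letI := σ.toAlgebra
  induction n with
  | zero =>
    refine ⟨∅, ?_⟩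
    rw [pow_zero, Ideal.one_eq_top]
    simp
  | succ n ih =>
    obtain ⟨T, hT⟩ := ih
    obtain ⟨G, hG⟩ := (IsNoetherian.noetherian ((IsLocalRing.maximalIdeal R)^n))
    refine ⟨T ∪ G, ?_⟩
    rw [eq_top_iff, ← hT]
    refine sup_le ?_ ?_
    · refine le_trans (Submodule.span_mono ?_) le_sup_left
      simp
    · intro y hy
      have hy' : y ∈ Submodule.span R (G : Set R) := by rw [hG]; exact hy
      clear hy
      suffices h : y ∈ (IsLocalRing.maximalIdeal R)^n ∧
        y ∈ Submodule.span (IsLocalRing.ResidueField R) ((T ∪ G : Finset R) : Set R) ⊔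
        ((IsLocalRing.maximalIdeal R)^(n+1)).restrictScalars (IsLocalRing.ResidueField R) from h.2
      induction hy' using Submodule.span_induction with
      | mem y hy =>
        refine ⟨?_, ?_⟩
        · rw [← hG]; exact Submodule.subset_span hy
        · refine Submodule.mem_sup_left (Submodule.subset_span ?_)
          simp only [Finset.coe_union]; exact Or.inr hy
      | zero => exact ⟨zero_mem _, zero_mem _⟩
      | add a b _ _ ha hb => exact ⟨add_mem ha.1 hb.1, add_mem ha.2 hb.2⟩
      | smul a y _ hy =>
        refine ⟨Ideal.mul_mem_left _ _ hy.1, ?_⟩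
        have e : a • y = (IsLocalRing.residue R a) • y + (a - σ (IsLocalRing.residue R a)) * y := by
          rw [Algebra.smul_def]
          change a * y = σ _ * y + _
          ring
        rw [e]
        refine add_mem (Submodule.smul_mem _ _ hy.2) (Submodule.mem_sup_right ?_)
        change _ ∈ (IsLocalRing.maximalIdeal R)^(n+1)
        rw [pow_succ']
        refine Ideal.mul_mem_mul ?_ hy.1
        rw [← IsLocalRing.residue_eq_zero_iff, map_sub, hσ, sub_self]

theorem mem_smul_top_pi {A : Type*} [CommRing A] (I : Ideal A) (T : Type*) [Fintype T] (z : T → A) :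
    z ∈ (I • ⊤ : Submodule A (T → A)) ↔ ∀ t, z t ∈ I := by
  classical
  constructor
  · intro h t
    induction h using Submodule.smul_induction_on' with
    | smul r hr n hn => exact Ideal.mul_mem_right _ _ hr
    | add a _ b _ ha hb => exact add_mem ha hb
  · intro h
    rw [pi_eq_sum_univ z]
    exact sum_mem fun t _ => Submodule.smul_mem_smul (h t) trivial

theorem precomplete_pi {A : Type*} [CommRing A] (I : Ideal A) [hp : IsPrecomplete I A] (T : Type*) [Fintype T] :
    IsPrecomplete I (T → A) := by
  refine ⟨fun f hf => ?_⟩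
  have h : ∀ t, ∃ L : A, ∀ n, f n t ≡ L [SMOD (I^n • ⊤ : Submodule A A)] := by
    intro t
    refine hp.prec' (fun n => f n t) fun {m n} hmn => ?_
    have := hf hmn
    rw [SModEq.sub_mem, mem_smul_top_pi] at this
    rw [SModEq.sub_mem, smul_eq_mul, Ideal.mul_top]
    exact this t
  choose L hL using h
  refine ⟨L, fun n => ?_⟩
  rw [SModEq.sub_mem, mem_smul_top_pi]
  intro t
  have := hL t n
  rw [SModEq.sub_mem, smul_eq_mul, Ideal.mul_top] at this
  exact this

theorem finite_evalHom {R : Type*} [CommRing R] [IsLocalRing R] [IsNoetherianRing R]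
    [IsAdicComplete (IsLocalRing.maximalIdeal R) R]
    (σ : IsLocalRing.ResidueField R →+* R) (hσ : ∀ k, IsLocalRing.residue R (σ k) = k)
    {d : ℕ} (x : Fin d → R)
    (hx : (Ideal.span (Set.range x)).radical = IsLocalRing.maximalIdeal R)
    (F : MvPowerSeries (Fin d) (IsLocalRing.ResidueField R) →+* R)
    (h1 : ∀ i, F (MvPowerSeries.X i) = x i) (h2 : ∀ k, F (MvPowerSeries.C k) = σ k) :
    F.Finite := by
  classical
  letI := F.toAlgebra
  change Module.Finite _ R
  have hxm : Ideal.span (Set.range x) ≤ IsLocalRing.maximalIdeal R := by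
    rw [← hx]; exact Ideal.le_radical
  set I : Ideal (MvPowerSeries (Fin d) (IsLocalRing.ResidueField R)) :=
    Ideal.span (Set.range MvPowerSeries.X) with hI
  have hmap : I.map F = Ideal.span (Set.range x) := by
    rw [hI, Ideal.map_span, ← Set.range_comp]
    congr 2
    ext i; simp [h1]
  have hIt : ∀ n, (I^n • ⊤ : Submodule (MvPowerSeries (Fin d) (IsLocalRing.ResidueField R)) R) =
      ((Ideal.span (Set.range x))^n).restrictScalars _ := by
    intro n
    rw [Ideal.smul_top_eq_map]
    change Submodule.restrictScalars _ ((I^n).map F) = _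
    rw [Ideal.map_pow, hmap]
  have hh : IsHausdorff (IsLocalRing.maximalIdeal R) R := inferInstance
  haveI : IsHausdorff I R := by
    refine ⟨fun y hy => hh.haus y fun n => ?_⟩
    have := hy n
    rw [SModEq.zero] at this ⊢
    rw [hIt] at this
    rw [smul_eq_mul, Ideal.mul_top]
    exact Ideal.pow_right_mono hxm n this
  obtain ⟨N, hN⟩ := Ideal.exists_pow_le_of_le_radical_of_fg (hx.ge)
    (IsNoetherian.noetherian (IsLocalRing.maximalIdeal R))
  obtain ⟨T, hT⟩ := fin_span σ hσ N
  let f : (T → MvPowerSeries (Fin d) (IsLocalRing.ResidueField R)) →ₗ[MvPowerSeries (Fin d) (IsLocalRing.ResidueField R)] R :=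
    Fintype.linearCombination _ (fun t : T => (t : R))
  haveI : IsPrecomplete I (T → MvPowerSeries (Fin d) (IsLocalRing.ResidueField R)) := precomplete_pi I T
  refine Module.Finite.of_surjective f (surjective_of_mkQ_comp_surjective (I := I) ?_)
  intro y
  obtain ⟨y, rfl⟩ := Submodule.mkQ_surjective _ y
  letI := σ.toAlgebra
  have hy : y ∈ Submodule.span (IsLocalRing.ResidueField R) (T : Set R) ⊔
      ((IsLocalRing.maximalIdeal R)^N).restrictScalars (IsLocalRing.ResidueField R) := by
    rw [hT]; trivial
  obtain ⟨a, ha, b, hb, rfl⟩ := Submodule.mem_sup.mp hy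
  rw [Submodule.mem_span_finset] at ha
  obtain ⟨c, -, rfl⟩ := ha
  refine ⟨fun t => MvPowerSeries.C (c t), ?_⟩
  rw [LinearMap.comp_apply, ← sub_eq_zero, ← map_sub, Submodule.mkQ_apply, Submodule.Quotient.mk_eq_zero]
  have e : f (fun t => MvPowerSeries.C (c t)) = ∑ a ∈ T, c a • a := by
    simp only [f, Fintype.linearCombination_apply]
    rw [← Finset.sum_coe_sort T]
    refine Finset.sum_congr rfl fun t _ => ?_
    rw [Algebra.smul_def, Algebra.smul_def]
    change F _ * _ = σ _ * _
    rw [h2]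
  rw [e, sub_add_cancel_left, neg_mem_iff]
  have := hIt 1
  rw [pow_one, pow_one] at this
  rw [this]
  exact hN hb

end FA
namespace FA

theorem coeff_X_mul_of_zero {K : Type*} [Field K] {d : ℕ} (i : Fin d) (α : Fin d →₀ ℕ) (h : α i = 0)
    (f : MvPowerSeries (Fin d) K) : MvPowerSeries.coeff α (MvPowerSeries.X i * f) = 0 := by
  rw [MvPowerSeries.X, MvPowerSeries.coeff_monomial_mul, if_neg]
  rw [Finsupp.single_le_iff]; omega

theorem coeff_X_mul_of_pos {K : Type*} [Field K] {d : ℕ} (i : Fin d) (α : Fin d →₀ ℕ) (h : α i ≠ 0)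
    (f : MvPowerSeries (Fin d) K) : MvPowerSeries.coeff α (MvPowerSeries.X i * f) =
      MvPowerSeries.coeff (α - Finsupp.single i 1) f := by
  rw [MvPowerSeries.X, MvPowerSeries.coeff_monomial_mul, if_pos, one_mul]
  rw [Finsupp.single_le_iff]; omega

theorem mem_span_X {K : Type*} [Field K] {d : ℕ} (a : MvPowerSeries (Fin d) K)
    (h : MvPowerSeries.constantCoeff a = 0) :
    ∃ c : Fin d → MvPowerSeries (Fin d) K, a = ∑ i, MvPowerSeries.X i * c i := by
  classical
  obtain ⟨c, hc⟩ : ∃ c : Fin d → MvPowerSeries (Fin d) K, ∀ i β, MvPowerSeries.coeff β (c i) =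
      if ∀ j < i, β j = 0 then MvPowerSeries.coeff (β + Finsupp.single i 1) a else 0 :=
    ⟨fun i β => if ∀ j < i, β j = 0 then MvPowerSeries.coeff (β + Finsupp.single i 1) a else 0, fun _ _ => rfl⟩
  refine ⟨c, ?_⟩
  ext α
  rw [map_sum]
  by_cases hα : α = 0
  · subst hα
    rw [Finset.sum_eq_zero]
    · exact h
    · intro i _
      exact coeff_X_mul_of_zero i _ rfl _
  · have hne : (Finset.univ.filter fun i => α i ≠ 0).Nonempty := by
      by_contra h'
      apply hα
      ext i
      by_contra h''
      exact h' ⟨i, by simpa using h''⟩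
    obtain ⟨hi1, hi2⟩ : α (Finset.min' _ hne) ≠ 0 ∧ ∀ j < Finset.min' _ hne, α j = 0 := by
      refine ⟨by simpa using Finset.min'_mem _ hne, fun j hj => ?_⟩
      by_contra h''
      exact absurd (Finset.min'_le _ j (by simpa using h'')) (not_le.mpr hj)
    set i := Finset.min' _ hne
    rw [Finset.sum_eq_single i]
    · rw [coeff_X_mul_of_pos i α hi1, hc, if_pos]
      · congr 2
        rw [tsub_add_cancel_of_le]
        rw [Finsupp.single_le_iff]; omega
      · intro j hj
        simp [hi2 j hj]
    · intro j _ hj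
      rcases lt_or_gt_of_ne hj with hj | hj
      · exact coeff_X_mul_of_zero j _ (hi2 j hj) _
      · by_cases h0 : α j = 0
        · exact coeff_X_mul_of_zero j _ h0 _
        rw [coeff_X_mul_of_pos j α h0, hc, if_neg]
        intro h'
        have := h' i hj
        rw [Finsupp.tsub_apply, Finsupp.single_eq_of_ne hj.ne] at this
        exact hi1 (by simpa using this)
    · simp

theorem psi_linear {K : Type*} [Field K] {S : Type*} [CommRing S] {d : ℕ} (σ : K →+* S) (x : Fin d → S)
    (φ : S →+ MvPowerSeries (Fin d) K) (h1 : ∀ k s, φ (σ k * s) = MvPowerSeries.C k * φ s)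
    (h2 : ∀ i s, φ (x i * s) = MvPowerSeries.X i * φ s)
    (F : MvPowerSeries (Fin d) K →+* S) (hF1 : ∀ i, F (MvPowerSeries.X i) = x i)
    (hF2 : ∀ k, F (MvPowerSeries.C k) = σ k) (a s) : φ (F a * s) = a * φ s := by
  set I : Ideal (MvPowerSeries (Fin d) K) := Ideal.span (Set.range MvPowerSeries.X) with hI
  have key : ∀ n : ℕ, ∀ a s, φ (F a * s) - a * φ s ∈ I^n := by
    intro n
    induction n with
    | zero => intro a s; simp
    | succ n ih =>
      intro a s
      obtain ⟨c, hc⟩ := mem_span_X (a - MvPowerSeries.C (MvPowerSeries.constantCoeff a)) (by simp)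
      have ha : a = MvPowerSeries.C (MvPowerSeries.constantCoeff a) + ∑ i, MvPowerSeries.X i * c i := by
        rw [← hc]; ring
      have e : φ (F a * s) - a * φ s = ∑ i, MvPowerSeries.X i * (φ (F (c i) * s) - c i * φ s) := by
        rw [ha]
        simp only [map_add, map_sum, map_mul, hF1, hF2, add_mul, Finset.sum_mul, h1, mul_assoc, h2,
          mul_sub, Finset.sum_sub_distrib]
        abel
      rw [e]
      refine sum_mem fun i _ => ?_
      rw [pow_succ']
      exact Ideal.mul_mem_mul (Ideal.subset_span ⟨i, rfl⟩) (ih _ _)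
  have hh : IsHausdorff I (MvPowerSeries (Fin d) K) := inferInstance
  rw [← sub_eq_zero]
  refine hh.haus _ fun n => ?_
  rw [SModEq.zero, smul_eq_mul, Ideal.mul_top]
  exact key n a s

theorem exists_phi {K : Type*} [Field K] {S : Type*} [CommRing S] {d : ℕ} (σ : K →+* S) (x : Fin d → S)
    (hw : ∀ l, (∏ i, x i)^l ∉ Ideal.span (Set.range fun i => x i^(l+1))) :
    ∃ φ : S →+ MvPowerSeries (Fin d) K, (∀ k s, φ (σ k * s) = MvPowerSeries.C k * φ s) ∧
      (∀ i s, φ (x i * s) = MvPowerSeries.X i * φ s) ∧ φ 1 ≠ 0 := by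
  classical
  set w := ∏ i, x i with hwdef
  let W := Localization.Away w
  let A := algebraMap S W
  have hu : ∀ i, ∃ y : W, A (x i) * y = 1 := by
    intro i
    have h1 : IsUnit (A w) := IsLocalization.Away.algebraMap_isUnit w
    have h2 : A (x i) ∣ A w := map_dvd A (Finset.dvd_prod_of_mem x (Finset.mem_univ i))
    exact (isUnit_of_dvd_unit h2 h1).exists_right_inv
  choose y hy using hu
  let Y : (Fin d →₀ ℕ) → W := fun α => ∏ i, y i^(α i + 1)
  letI : Algebra K W := (A.comp σ).toAlgebra
  have hsm : ∀ (k : K) (z : W), k • z = A (σ k) * z := fun k z => Algebra.smul_def k z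
  let N : Submodule K W := Submodule.span K {z | ∃ i α s, α i = 0 ∧ z = A (x i * s) * Y α}
  have hN : Y 0 ∉ N := by
    intro hmem
    have key : ∃ k0, ∀ k ≥ k0, ∃ t ∈ Ideal.span (Set.range fun i => x i^(k+1)), A t = A w^(k+1) * Y 0 := by
      generalize Y 0 = z0 at hmem
      induction hmem using Submodule.span_induction with
      | zero => exact ⟨0, fun k _ => ⟨0, zero_mem _, by simp⟩⟩
      | add a b _ _ ha hb =>
        obtain ⟨k1, h1⟩ := ha
        obtain ⟨k2, h2⟩ := hb
        refine ⟨max k1 k2, fun k hk => ?_⟩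
        obtain ⟨t1, ht1, e1⟩ := h1 k (le_trans (le_max_left _ _) hk)
        obtain ⟨t2, ht2, e2⟩ := h2 k (le_trans (le_max_right _ _) hk)
        exact ⟨t1 + t2, add_mem ht1 ht2, by rw [map_add, e1, e2]; ring⟩
      | smul c a _ ha =>
        obtain ⟨k1, h1⟩ := ha
        refine ⟨k1, fun k hk => ?_⟩
        obtain ⟨t1, ht1, e1⟩ := h1 k hk
        exact ⟨σ c * t1, Ideal.mul_mem_left _ _ ht1, by rw [map_mul, e1, hsm]; ring⟩
      | mem z hz =>
        obtain ⟨i, α, s, hα, rfl⟩ := hz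
        refine ⟨∑ j, α j, fun k hk => ?_⟩
        have hle : ∀ j, α j ≤ k := fun j =>
          le_trans (Finset.single_le_sum (f := fun j => α j) (fun _ _ => Nat.zero_le _) (Finset.mem_univ j)) hk
        refine ⟨x i * s * ∏ j, x j^(k - α j), ?_, ?_⟩
        · rw [← Finset.mul_prod_erase _ _ (Finset.mem_univ i), hα]
          have : x i * s * (x i ^ (k - 0) * ∏ j ∈ Finset.univ.erase i, x j^(k - α j)) =
            (s * ∏ j ∈ Finset.univ.erase i, x j^(k - α j)) * x i^(k+1) := by
            rw [Nat.sub_zero]; ring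
          rw [this]
          exact Ideal.mul_mem_left _ _ (Ideal.subset_span ⟨i, rfl⟩)
        · have : A w^(k+1) * Y α = A (∏ j, x j^(k - α j)) := by
            simp only [Y, hwdef, map_prod, ← Finset.prod_pow, ← Finset.prod_mul_distrib, map_pow]
            refine Finset.prod_congr rfl fun j _ => ?_
            have e : k + 1 = (k - α j) + (α j + 1) := by have := hle j; omega
            calc A (x j)^(k+1) * y j^(α j + 1) = A (x j)^(k - α j) * (A (x j) * y j)^(α j + 1) := by
                  conv_lhs => rw [e]
                  rw [pow_add, mul_pow]; ring
              _ = _ := by rw [hy, one_pow, mul_one]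
          rw [map_mul, ← this]; ring
    obtain ⟨k, hk⟩ := key
    obtain ⟨t, ht, e⟩ := hk k le_rfl
    have e0 : A w * Y 0 = 1 := by
      simp [Y, hwdef, map_prod, ← Finset.prod_mul_distrib, hy]
    have e1 : A t = A (w^k) := by
      rw [e, pow_succ, mul_assoc, e0, mul_one, map_pow]
    obtain ⟨⟨_, m, rfl⟩, hm⟩ := (IsLocalization.eq_iff_exists (Submonoid.powers w) W).mp e1
    refine hw (m + k) ?_
    rw [pow_add]
    change w^m * t = w^m * w^k at hm
    rw [← hm]
    clear hm e1 e hk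
    induction ht using Submodule.span_induction with
    | zero => simp
    | add a b _ _ ha hb => rw [mul_add]; exact add_mem ha hb
    | smul c a _ ha => rw [smul_eq_mul, mul_left_comm]; exact Ideal.mul_mem_left _ _ ha
    | mem z hz =>
      obtain ⟨i, rfl⟩ := hz
      obtain ⟨v, hv⟩ : x i ∣ w := Finset.dvd_prod_of_mem x (Finset.mem_univ i)
      have : w^m * x i^(k+1) = v^m * x i^(m+k+1) := by rw [hv]; ring
      change w^m * x i^(k+1) ∈ _
      rw [this]
      exact Ideal.mul_mem_left _ _ (Ideal.subset_span ⟨i, rfl⟩)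
  obtain ⟨ψ, hψ1, hψ2⟩ := Submodule.exists_le_ker_of_notMem hN
  let φ : S →+ MvPowerSeries (Fin d) K :=
    { toFun := fun s α => ψ (A s * Y α)
      map_zero' := by funext α; change ψ _ = 0; simp
      map_add' := fun a b => by
        funext α
        change _ = ψ _ + ψ _
        rw [map_add, add_mul, map_add] }
  have hφ : ∀ s α, MvPowerSeries.coeff α (φ s) = ψ (A s * Y α) := fun _ _ => rfl
  refine ⟨φ, fun k s => ?_, fun i s => ?_, fun h => ?_⟩
  · ext α
    rw [MvPowerSeries.coeff_C_mul, hφ, hφ, map_mul A, mul_assoc, ← hsm, map_smul, smul_eq_mul]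
  · ext α
    rw [hφ]
    by_cases h0 : α i = 0
    · rw [coeff_X_mul_of_zero i α h0]
      exact hψ2 (Submodule.subset_span ⟨i, α, s, h0, rfl⟩)
    · rw [coeff_X_mul_of_pos i α h0, hφ]
      congr 1
      rw [map_mul A, mul_comm (A (x i)), mul_assoc]
      congr 1
      simp only [Y]
      rw [← Finset.mul_prod_erase _ _ (Finset.mem_univ i),
        ← Finset.mul_prod_erase _ (fun j => y j^((α - Finsupp.single i 1 : Fin d →₀ ℕ) j + 1)) (Finset.mem_univ i), ← mul_assoc]
      congr 1
      · have h' : (α - Finsupp.single i 1 : Fin d →₀ ℕ) i + 1 = α i := by simp; omega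
        rw [h', pow_succ (y i) (α i), mul_comm _ (y i), ← mul_assoc, hy, one_mul]
      · refine Finset.prod_congr rfl fun j hj => ?_
        rw [Finsupp.tsub_apply, Finsupp.single_eq_of_ne (Finset.ne_of_mem_erase hj), Nat.sub_zero]
  · apply hψ1
    have := hφ 1 0
    rw [h, map_zero, map_one, one_mul] at this
    exact this.symm

end FA
namespace FA

theorem exists_dual {R : Type*} [CommRing R] [IsDomain R] {D : Type*} [AddCommGroup D] [Module R D]
    [Module.Finite R D] (v : D) (hv : ∀ r : R, r ≠ 0 → r • v ≠ 0) : ∃ f : D →ₗ[R] R, f v ≠ 0 := by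
  classical
  let L := FractionRing R
  letI : Module L (LocalizedModule (nonZeroDivisors R) D) :=
    inferInstanceAs (Module (Localization (nonZeroDivisors R)) (LocalizedModule (nonZeroDivisors R) D))
  haveI : IsScalarTower R L (LocalizedModule (nonZeroDivisors R) D) :=
    inferInstanceAs (IsScalarTower R (Localization (nonZeroDivisors R)) (LocalizedModule (nonZeroDivisors R) D))
  let ι := LocalizedModule.mkLinearMap (nonZeroDivisors R) D
  have h0 : ι v ∉ (⊥ : Submodule L (LocalizedModule (nonZeroDivisors R) D)) := by
    intro h
    rw [Submodule.mem_bot] at h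
    obtain ⟨c, hc⟩ := (IsLocalizedModule.eq_zero_iff (nonZeroDivisors R) ι).mp h
    exact hv c (nonZeroDivisors.ne_zero c.2) hc
  obtain ⟨g, hg, -⟩ := Submodule.exists_le_ker_of_notMem h0
  obtain ⟨T, hT⟩ := Module.Finite.fg_top (R := R) (M := D)
  obtain ⟨b, hb⟩ := IsLocalization.exist_integer_multiples (nonZeroDivisors R) T (fun t => g (ι t))
  let G : D →ₗ[R] L := (b : R) • ((g.restrictScalars R).comp ι)
  have hG : ∀ z, G z = (b : R) • g (ι z) := fun _ => rfl
  have hr : ∀ z, G z ∈ LinearMap.range (Algebra.linearMap R L) := by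
    intro z
    have : (⊤ : Submodule R D) ≤ (LinearMap.range (Algebra.linearMap R L)).comap G := by
      rw [← hT, Submodule.span_le]
      intro t ht
      exact hb t ht
    exact this trivial
  have hinj : Function.Injective (Algebra.linearMap R L) := IsFractionRing.injective R L
  let e := LinearEquiv.ofInjective _ hinj
  refine ⟨e.symm.toLinearMap.comp (G.codRestrict _ hr), fun h => ?_⟩
  have h' : e.symm (G.codRestrict _ hr v) = 0 := h
  rw [LinearEquiv.map_eq_zero_iff] at h'
  have h'' : G v = 0 := congrArg Subtype.val h'
  rw [hG, Algebra.smul_def, mul_eq_zero] at h''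
  rcases h'' with h'' | h''
  · exact nonZeroDivisors.ne_zero b.2 (hinj (by simpa using h''))
  · exact hg h''

theorem exists_functional_aux {R : Type*} [CommRing R] [IsDomain R] {A : Type*} [CommRing A] [IsDomain A]
    [IsNoetherianRing A] [Algebra A R] [Module.Finite A R] {S : Type*} [CommRing S] [Algebra R S]
    (φ : S →+ A) (hφ : ∀ a s, φ (algebraMap R S (algebraMap A R a) * s) = a * φ s) (h1 : φ 1 ≠ 0) :
    ∃ f : S →ₗ[R] R, f 1 ≠ 0 := by
  classical
  letI : Algebra A S := ((algebraMap R S).comp (algebraMap A R)).toAlgebra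
  haveI : IsScalarTower A R S := IsScalarTower.of_algebraMap_eq fun _ => rfl
  let φ' : S →ₗ[A] A :=
    { toFun := φ
      map_add' := map_add φ
      map_smul' := fun a s => by
        rw [Algebra.smul_def]; exact hφ a s }
  have hφ' : ∀ s, φ' s = φ s := fun _ => rfl
  let Q : Submodule R S :=
    { carrier := {s | ∀ r : R, φ (r • s) = 0}
      zero_mem' := fun r => by simp
      add_mem' := fun {a b} ha hb r => by rw [smul_add, map_add, ha r, hb r, add_zero]
      smul_mem' := fun c s hs r => by
        rw [smul_smul]; exact hs _ }
  have hQ : ∀ s, s ∈ Q ↔ ∀ r : R, φ (r • s) = 0 := fun _ => Iff.rfl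
  obtain ⟨T, hT⟩ := Module.Finite.fg_top (R := A) (M := R)
  let θ : S →ₗ[A] (T → A) := LinearMap.pi fun t => φ'.comp (LinearMap.lsmul R S (t : R) |>.restrictScalars A)
  have hθ : ∀ s t, θ s t = φ ((t : R) • s) := fun _ _ => rfl
  have hker : LinearMap.ker θ = Q.restrictScalars A := by
    ext s
    rw [LinearMap.mem_ker, Submodule.restrictScalars_mem, hQ]
    constructor
    · intro h r
      let ev : R →ₗ[A] A := φ'.comp ((LinearMap.toSpanSingleton R S s).restrictScalars A)
      have hev : ∀ r, ev r = φ (r • s) := fun _ => rfl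
      have : (⊤ : Submodule A R) ≤ LinearMap.ker ev := by
        rw [← hT, Submodule.span_le]
        intro t ht
        have := congrFun h ⟨t, ht⟩
        rw [hθ] at this
        exact this
      have := this (trivial : r ∈ ⊤)
      rwa [LinearMap.mem_ker, hev] at this
    · intro h
      ext t
      exact h t
  haveI : Module.Finite A (S ⧸ Q) := by
    have e1 : (S ⧸ LinearMap.ker θ) ≃ₗ[A] LinearMap.range θ := θ.quotKerEquivRange
    haveI : Module.Finite A (S ⧸ LinearMap.ker θ) := Module.Finite.equiv e1.symm
    rw [hker] at this
    exact this
  haveI : Module.Finite R (S ⧸ Q) := Module.Finite.of_restrictScalars_finite A R _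
  obtain ⟨f, hf⟩ := exists_dual (R := R) (Q.mkQ 1) (by
    intro r hr h
    rw [← map_smul, Submodule.mkQ_apply, Submodule.Quotient.mk_eq_zero, hQ] at h
    have halg : IsAlgebraic A r := (Algebra.IsIntegral.isIntegral (R := A) r).isAlgebraic
    obtain ⟨a, ha, r', hr'⟩ := halg.exists_nonzero_dvd (mem_nonZeroDivisors_of_ne_zero hr)
    have := h r'
    rw [smul_smul, mul_comm, ← hr', Algebra.smul_def, hφ, mul_eq_zero] at this
    exact this.elim ha h1)
  exact ⟨f.comp Q.mkQ, hf⟩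

end FA
namespace FA

theorem exists_functional {R : Type*} [CommRing R] [IsNoetherianRing R] [IsLocalRing R] [IsDomain R]
    [IsAdicComplete (IsLocalRing.maximalIdeal R) R] (p : ℕ) [Fact p.Prime] [CharP R p]
    {d : ℕ} (x : Fin d → R) (hx : (Ideal.span (Set.range x)).radical = IsLocalRing.maximalIdeal R)
    {S : Type*} [CommRing S] [Algebra R S]
    (hw : ∀ l : ℕ, (∏ i, algebraMap R S (x i)) ^ l ∉
      Ideal.span (Set.range fun i => algebraMap R S (x i) ^ (l + 1))) :
    ∃ f : S →ₗ[R] R, f 1 ≠ 0 := by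
  obtain ⟨σ, hσ⟩ := exists_coeffField R p
  have hxm : ∀ i, x i ∈ IsLocalRing.maximalIdeal R := fun i => by
    rw [← hx]; exact Ideal.le_radical (Ideal.subset_span ⟨i, rfl⟩)
  obtain ⟨F, hF1, hF2⟩ := exists_evalHom σ x hxm
  have hfin := finite_evalHom σ hσ x hx F hF1 hF2
  obtain ⟨φ, h1, h2, h3⟩ := exists_phi ((algebraMap R S).comp σ) (fun i => algebraMap R S (x i)) hw
  have hlin := psi_linear ((algebraMap R S).comp σ) (fun i => algebraMap R S (x i)) φ h1 h2
    ((algebraMap R S).comp F) (fun i => by simp [hF1]) (fun k => by simp [hF2])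
  letI := F.toAlgebra
  haveI : Module.Finite (MvPowerSeries (Fin d) (IsLocalRing.ResidueField R)) R := hfin
  haveI : IsDomain (MvPowerSeries (Fin d) (IsLocalRing.ResidueField R)) := NoZeroDivisors.to_isDomain _
  exact exists_functional_aux φ hlin h3

theorem forward {R : Type u} [CommRing R] [IsNoetherianRing R] [IsLocalRing R] [IsDomain R]
    [IsAdicComplete (IsLocalRing.maximalIdeal R) R]
    (p : ℕ) [hp : Fact p.Prime] [CharP R p] (d : ℕ) (hd : ringKrullDim R = d)
    (n : ℕ) (g : Fin n → R) (u : R)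
    (H : ¬ Subsingleton ((localCohomology (IsLocalRing.maximalIdeal R) d).obj
        (ModuleCat.of R (Forc n g u)))) (x : Fin d → R)
    (hx : (Ideal.span (Set.range x)).radical = IsLocalRing.maximalIdeal R) :
    IsQSequence (fun i => algebraMap R (Forc n g u) (x i)) := by
  have hnt : Nontrivial (Forc n g u) := by
    by_contra h
    rw [not_nontrivial_iff_subsingleton] at h
    obtain ⟨k, m, hm⟩ := lc_ne_zero x (IsLocalRing.maximalIdeal R) hx _ H
    have hs : Subsingleton (ModuleCat.of R (Forc n g u)) := h
    exact hm 0 ⟨fun _ => 0, Subsingleton.elim _ _⟩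
  have h0 : (p : Forc n g u) = 0 := by
    rw [← map_natCast (algebraMap R (Forc n g u)), CharP.cast_eq_zero, map_zero]
  haveI : CharP (Forc n g u) p := (CharP.charP_iff_prime_eq_zero hp.out).mpr h0
  have hw := frob_lc (IsLocalRing.maximalIdeal R) p x hx (Forc n g u) H
  obtain ⟨f, hf⟩ := exists_functional p x hx hw
  refine qseq_of_c p d hd n g u x hx hw (f 1) hf fun e => ?_
  let z : Fin n → Forc n g u := fun l => Ideal.Quotient.mk _ (MvPolynomial.X l)
  refine ⟨fun l => f (z l ^ p^e), ?_⟩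
  have hu : algebraMap R (Forc n g u) u = ∑ l, z l * algebraMap R (Forc n g u) (g l) := by
    have h : ∀ r : R, algebraMap R (Forc n g u) r = Ideal.Quotient.mk _ (MvPolynomial.C r) := fun _ => rfl
    simp only [h, z]
    rw [← sub_eq_zero]
    simp only [← map_mul, ← map_sum, ← map_sub]
    exact Ideal.Quotient.eq_zero_iff_mem.mpr (Ideal.subset_span rfl)
  have hq : algebraMap R (Forc n g u) (u^p^e) = ∑ l, (g l^p^e) • z l^p^e := by
    rw [map_pow, hu, sum_pow_char_pow]
    refine Finset.sum_congr rfl fun l _ => ?_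
    rw [mul_pow, mul_comm, ← map_pow]
    exact (Algebra.smul_def _ _).symm
  have := congrArg f hq
  rw [Algebra.algebraMap_eq_smul_one, map_smul, map_sum, smul_eq_mul] at this
  rw [mul_comm, this]
  refine Finset.sum_congr rfl fun l _ => ?_
  rw [map_smul, smul_eq_mul, mul_comm]

end FA
/-- Let `(R,m)` be a `d`-dimensional Noetherian complete local domain
of prime characteristic `p > 0`, `I = (g₁,…,g_n)` an ideal, `u ∈ R`, and
`S = R[Z₁,…,Z_n]/(u − Σ Z_l g_l)` the generic forcing algebra. Then `H^d_m(S) ≠ 0`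
if and only if the image in `S` of every system of parameters of `R` is a Q-sequence. -/
theorem genericForcingAlgebra_localCohomology_ne_zero_iff
    (R : Type u) [CommRing R] [IsNoetherianRing R] [IsLocalRing R] [IsDomain R]
    [IsAdicComplete (IsLocalRing.maximalIdeal R) R]
    (p : ℕ) (hp : p.Prime) [CharP R p]
    (d : ℕ) (hd : ringKrullDim R = d)
    (n : ℕ) (g : Fin n → R) (u : R) :
    (Nontrivial ((localCohomology (IsLocalRing.maximalIdeal R) d).obj
        (ModuleCat.of R (MvPolynomial (Fin n) R ⧸
          Ideal.span {MvPolynomial.C u -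
            ∑ l : Fin n, MvPolynomial.X l * MvPolynomial.C (g l)})))) ↔
    (∀ x : Fin d → R,
      (Ideal.span (Set.range x)).radical = IsLocalRing.maximalIdeal R →
      IsQSequence (fun i => algebraMap R (MvPolynomial (Fin n) R ⧸
        Ideal.span {MvPolynomial.C u -
          ∑ l : Fin n, MvPolynomial.X l * MvPolynomial.C (g l)}) (x i))) := by
  haveI : Fact p.Prime := ⟨hp⟩
  constructor
  · intro H x hx
    exact FA.forward p d hd n g u (not_subsingleton_iff_nontrivial.mpr H) x hx
  · intro H
    by_contra hcon
    rw [not_nontrivial_iff_subsingleton] at hcon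
    obtain ⟨x, hx, hq⟩ := FA.backward hd (FA.Forc n g u) hcon
    exact hq (H x hx)
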